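/- There is no constant C > 0 such that |E(x)| ≤ C·x^{1/2} for all x ≥ 1; consequently the exponent 1/2 in the known upper bound |E(x)| ≪ x^{1/2}·log x cannot be improved. -/

import Mathlib

open Real

/-- `r₂(m)`: the number of representations of `m` as a sum of two squares of integers. -/
noncomputable def r2 (m : ℕ) : ℕ :=
  Set.ncard {p : ℤ × ℤ | p.1 ^ 2 + p.2 ^ 2 = (m : ℤ)}

/-- `S(x)`: the number of integer points `(a,b,w)` with `(a²+b²)² + w² < x`. -/
noncomputable def S (x : ℝ) : ℕ :=
  Set.ncard {p : ℤ × ℤ × ℤ |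
    (((p.1 : ℝ) ^ 2 + (p.2.1 : ℝ) ^ 2) ^ 2 + (p.2.2 : ℝ) ^ 2) < x}

/-- `E(x) = S(x) - (π²/2)·x`. -/
noncomputable def E (x : ℝ) : ℝ := (S x : ℝ) - (Real.pi ^ 2 / 2) * x

open Filter Topology MeasureTheory Set

lemma integrable_weight {a σ : ℝ} (ha : 0 < a) (hσ : 0 < σ) :
    IntegrableOn (fun t : ℝ => t ^ (a - 1) * rexp (-σ * t)) (Ioi 0) := by
  have := integrableOn_rpow_mul_exp_neg_mul_rpow (p := 1) (s := a - 1) (b := σ) (by linarith) one_pos hσ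
  simpa using this

lemma integrable_cweight {a : ℝ} {s : ℂ} (ha : 0 < a) (hs : 0 < s.re) :
    IntegrableOn (fun t : ℝ => ((t ^ (a - 1) : ℝ) : ℂ) * Complex.exp (-s * t)) (Ioi 0) := by
  refine Integrable.mono (integrable_weight ha hs) ?_ ?_
  · apply Measurable.aestronglyMeasurable
    fun_prop
  · refine Eventually.of_forall fun t => ?_
    simp [Complex.norm_exp]

lemma laplace_pow {a : ℝ} (ha : 0 < a) {s : ℂ} (hs : 0 < s.re) :
    ∫ t in Ioi (0 : ℝ), ((t ^ (a - 1) : ℝ) : ℂ) * Complex.exp (-s * t)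
      = s ^ (-(a : ℂ)) * (Real.Gamma a : ℂ) := by
  have hopen : IsOpen {s : ℂ | 0 < s.re} := isOpen_lt continuous_const Complex.continuous_re
  have h1 : AnalyticOnNhd ℂ (fun s : ℂ => ∫ t in Ioi (0 : ℝ), ((t ^ (a - 1) : ℝ) : ℂ) * Complex.exp (-s * t))
      {s : ℂ | 0 < s.re} := by
    apply DifferentiableOn.analyticOnNhd _ hopen
    intro s₀ hs₀
    apply DifferentiableAt.differentiableWithinAt
    have hs₀' : 0 < s₀.re := hs₀
    have hb : IntegrableOn (fun t : ℝ => t ^ ((a + 1) - 1) * rexp (-(s₀.re / 2) * t)) (Ioi 0) :=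
      integrable_weight (by linarith) (by linarith)
    refine (hasDerivAt_integral_of_dominated_loc_of_deriv_le
      (F' := fun s t => ((t ^ (a - 1) : ℝ) : ℂ) * (Complex.exp (-s * t) * (-t)))
      (s := Metric.ball s₀ (s₀.re / 2)) (Metric.ball_mem_nhds _ (by linarith)) ?_ ?_ ?_ ?_ hb ?_).2.differentiableAt
    · refine Eventually.of_forall fun s => ?_
      apply Measurable.aestronglyMeasurable
      fun_prop
    · exact integrable_cweight ha hs₀'
    · apply Measurable.aestronglyMeasurable
      fun_prop
    · refine (ae_restrict_iff' measurableSet_Ioi).2 (Eventually.of_forall fun t ht s hs => ?_)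
      have ht : 0 < t := ht
      have hre : s₀.re / 2 ≤ s.re := by
        have := Complex.abs_re_le_norm (s - s₀)
        rw [Metric.mem_ball, dist_eq_norm] at hs
        have h3 := abs_le.1 (this.trans hs.le)
        simp at h3; linarith [h3.1]
      rw [norm_mul, norm_mul, Complex.norm_real, norm_neg, Complex.norm_real, Complex.norm_exp,
        Real.norm_of_nonneg (by positivity), Real.norm_of_nonneg ht.le,
        show a + 1 - 1 = (a - 1) + 1 by ring, rpow_add ht, rpow_one]
      have : rexp ((-s * t).re) ≤ rexp (-(s₀.re / 2) * t) := by
        apply Real.exp_le_exp.2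
        simp
        nlinarith
      calc t ^ (a - 1) * (rexp ((-s * t).re) * t) = t ^ (a - 1) * t * rexp ((-s * t).re) := by ring
        _ ≤ _ := by gcongr
    · refine Eventually.of_forall fun t s hs => ?_
      have : HasDerivAt (fun s : ℂ => -s * t) (-(t : ℂ)) s := by
        simpa using (hasDerivAt_id s).neg.mul_const (t : ℂ)
      exact (this.cexp).const_mul _
  have h2 : AnalyticOnNhd ℂ (fun s : ℂ => s ^ (-(a : ℂ)) * (Real.Gamma a : ℂ)) {s : ℂ | 0 < s.re} := by
    apply DifferentiableOn.analyticOnNhd _ hopen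
    intro s₀ hs₀
    apply DifferentiableAt.differentiableWithinAt
    refine DifferentiableAt.mul_const ?_ _
    exact differentiableAt_id.cpow_const (Or.inl hs₀)
  have hconn : IsPreconnected {s : ℂ | 0 < s.re} := (convex_halfSpace_re_gt 0).isPreconnected
  refine h1.eqOn_of_preconnected_of_frequently_eq h2 hconn (z₀ := 1) (by simp) ?_ hs
  have htend : Tendsto (fun n : ℕ => ((1 + 1 / ((n : ℝ) + 1) : ℝ) : ℂ)) atTop (𝓝[≠] 1) := by
    apply tendsto_nhdsWithin_of_tendsto_nhds_of_eventually_within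
    · have := (tendsto_one_div_add_atTop_nhds_zero_nat (𝕜 := ℝ)).const_add 1
      rw [add_zero] at this
      exact_mod_cast (Complex.continuous_ofReal.tendsto 1).comp this
    · refine Eventually.of_forall fun n => ?_
      have : (1 + 1 / ((n : ℝ) + 1) : ℝ) ≠ 1 := by
        have : (0:ℝ) < 1 / ((n : ℝ) + 1) := by positivity
        linarith
      simp only [mem_compl_iff, mem_singleton_iff]
      exact_mod_cast this
  refine htend.frequently (Frequently.of_forall fun n => ?_)
  set r : ℝ := 1 + 1 / ((n : ℝ) + 1) with hr
  have hr0 : 0 < r := by positivity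
  have := Real.integral_rpow_mul_exp_neg_mul_Ioi ha hr0
  calc ∫ t in Ioi (0 : ℝ), ((t ^ (a - 1) : ℝ) : ℂ) * Complex.exp (-(r : ℂ) * t)
      = ∫ t in Ioi (0 : ℝ), ((t ^ (a - 1) * rexp (-(r * t)) : ℝ) : ℂ) := by
        refine setIntegral_congr_fun measurableSet_Ioi fun t _ => ?_
        push_cast; simp
    _ = ((1 / r) ^ a * Real.Gamma a : ℝ) := by rw [integral_complex_ofReal, this]
    _ = _ := by
        rw [one_div, inv_rpow hr0.le, ← rpow_neg hr0.le]
        push_cast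
        rw [Complex.ofReal_cpow hr0.le]; simp

noncomputable def rad (p : ℤ × ℤ) : ℝ := √((p.1 : ℝ) ^ 2 + (p.2 : ℝ) ^ 2)

noncomputable def Mn (σ : ℝ) (f : ℝ → ℝ) : ℝ :=
  σ ^ (3 / 2 : ℝ) * ∫ t in Ioi (0 : ℝ), f t * (t ^ ((3 / 2 : ℝ) - 1) * rexp (-σ * t))

def BM (f : ℝ → ℝ) : Prop := Measurable f ∧ ∃ B, ∀ t, 0 < t → |f t| ≤ B

lemma BM.integrable {f : ℝ → ℝ} (hf : BM f) {σ : ℝ} (hσ : 0 < σ) :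
    IntegrableOn (fun t => f t * (t ^ ((3 / 2 : ℝ) - 1) * rexp (-σ * t))) (Ioi 0) := by
  obtain ⟨hm, B, hB⟩ := hf
  refine Integrable.bdd_mul (c := B) (integrable_weight (by norm_num) hσ) hm.aestronglyMeasurable ?_
  exact (ae_restrict_iff' measurableSet_Ioi).2 (Eventually.of_forall fun t ht => hB t ht)

lemma BM.add {f g : ℝ → ℝ} (hf : BM f) (hg : BM g) : BM (fun t => f t + g t) := by
  obtain ⟨hm, B, hB⟩ := hf
  obtain ⟨hm', B', hB'⟩ := hg
  exact ⟨hm.add hm', B + B', fun t ht => (abs_add_le _ _).trans (add_le_add (hB t ht) (hB' t ht))⟩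

lemma BM.mul {f g : ℝ → ℝ} (hf : BM f) (hg : BM g) : BM (fun t => f t * g t) := by
  obtain ⟨hm, B, hB⟩ := hf
  obtain ⟨hm', B', hB'⟩ := hg
  refine ⟨hm.mul hm', B * B', fun t ht => ?_⟩
  rw [abs_mul]
  exact mul_le_mul (hB t ht) (hB' t ht) (abs_nonneg _) ((abs_nonneg _).trans (hB t ht))

lemma BM.const (c : ℝ) : BM (fun _ => c) := ⟨measurable_const, |c|, fun _ _ => le_rfl⟩

lemma BM.cos (μ φ : ℝ) : BM (fun t => Real.cos (2 * π * μ * t + φ)) :=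
  ⟨by fun_prop, 1, fun _ _ => abs_cos_le_one _⟩

lemma BM.cos' (μ : ℝ) : BM (fun t => Real.cos (2 * π * μ * t)) :=
  ⟨by fun_prop, 1, fun _ _ => abs_cos_le_one _⟩

lemma Mn_add {f g : ℝ → ℝ} (hf : BM f) (hg : BM g) {σ : ℝ} (hσ : 0 < σ) :
    Mn σ (fun t => f t + g t) = Mn σ f + Mn σ g := by
  unfold Mn
  rw [← mul_add, ← integral_add (hf.integrable hσ) (hg.integrable hσ)]
  congr 2
  ext t; ring

lemma Mn_const_mul (c : ℝ) (f : ℝ → ℝ) (σ : ℝ) :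
    Mn σ (fun t => c * f t) = c * Mn σ f := by
  unfold Mn
  simp_rw [mul_assoc c]
  rw [integral_const_mul]; ring

lemma Mn_mono {f g : ℝ → ℝ} (hf : BM f) (hg : BM g) {σ : ℝ} (hσ : 0 < σ)
    (h : ∀ t, 0 < t → f t ≤ g t) : Mn σ f ≤ Mn σ g := by
  unfold Mn
  refine mul_le_mul_of_nonneg_left ?_ (by positivity)
  refine setIntegral_mono_on (hf.integrable hσ) (hg.integrable hσ) measurableSet_Ioi fun t ht => ?_
  have : (0 : ℝ) < t := ht
  exact mul_le_mul_of_nonneg_right (h t ht) (by positivity)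

lemma Mn_one {σ : ℝ} (hσ : 0 < σ) : Mn σ (fun _ => 1) = Real.Gamma (3 / 2) := by
  unfold Mn
  have := Real.integral_rpow_mul_exp_neg_mul_Ioi (a := 3 / 2) (by norm_num) hσ
  simp only [one_mul, neg_mul]
  rw [this, ← mul_assoc, ← mul_rpow hσ.le (by positivity), mul_one_div_cancel hσ.ne', one_rpow, one_mul]

/-- the complex frequency -/
noncomputable def fr (σ μ : ℝ) : ℂ := (σ : ℂ) + ((2 * π * μ : ℝ) : ℂ) * Complex.I

lemma fr_re (σ μ : ℝ) : (fr σ μ).re = σ := by simp [fr]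

lemma fr_im (σ μ : ℝ) : (fr σ μ).im = 2 * π * μ := by simp [fr]

lemma fr_tendsto (μ : ℝ) : Tendsto (fun σ : ℝ => fr σ μ) (𝓝[>] 0) (𝓝 (((2 * π * μ : ℝ) : ℂ) * Complex.I)) := by
  have : Continuous (fun σ : ℝ => fr σ μ) := by unfold fr; fun_prop
  have h := (this.tendsto 0).mono_left (nhdsWithin_le_nhds (s := Ioi (0:ℝ)))
  simpa [fr] using h

lemma rpow_tendsto_zero {a : ℝ} (ha : 0 < a) : Tendsto (fun σ : ℝ => σ ^ a) (𝓝[>] 0) (𝓝 0) := by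
  have := (Real.continuousAt_rpow_const 0 a (Or.inr ha.le)).tendsto.mono_left
    (nhdsWithin_le_nhds (s := Ioi (0:ℝ)))
  simpa [Real.zero_rpow ha.ne'] using this

lemma slit_fr {μ : ℝ} (hμ : μ ≠ 0) : ((2 * π * μ : ℝ) : ℂ) * Complex.I ∈ Complex.slitPlane := by
  rw [Complex.mem_slitPlane_iff]
  right
  simp [hμ, pi_ne_zero]

lemma laplace_tendsto {a : ℝ} (ha : 0 < a) {μ : ℝ} (hμ : μ ≠ 0) :
    Tendsto (fun σ : ℝ => ((σ ^ (3 / 2 : ℝ) : ℝ) : ℂ) *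
      ∫ t in Ioi (0 : ℝ), ((t ^ (a - 1) : ℝ) : ℂ) * Complex.exp (-fr σ μ * t)) (𝓝[>] 0) (𝓝 0) := by
  have h1 : Tendsto (fun σ : ℝ => ((σ ^ (3 / 2 : ℝ) : ℝ) : ℂ) *
      ((fr σ μ) ^ (-(a : ℂ)) * (Real.Gamma a : ℂ))) (𝓝[>] 0) (𝓝 0) := by
    have h2 : Tendsto (fun σ : ℝ => ((σ ^ (3 / 2 : ℝ) : ℝ) : ℂ)) (𝓝[>] 0) (𝓝 0) := by
      exact_mod_cast (Complex.continuous_ofReal.tendsto 0).comp (rpow_tendsto_zero (a := 3/2) (by norm_num))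
    have h3 := ((continuousAt_cpow_const (b := -(a : ℂ)) (slit_fr hμ)).tendsto.comp (fr_tendsto μ)).mul_const (Real.Gamma a : ℂ)
    simpa using h2.mul h3
  refine h1.congr' ?_
  filter_upwards [self_mem_nhdsWithin] with σ hσ
  rw [laplace_pow ha (by rw [fr_re]; exact hσ)]

lemma Mn_eq_re {f : ℝ → ℝ} (hf : BM f) (μ φ : ℝ) {σ : ℝ} (hσ : 0 < σ) :
    Mn σ (fun t => f t * Real.cos (2 * π * μ * t + φ)) =
      (Complex.exp (-φ * Complex.I) * (((σ ^ (3 / 2 : ℝ) : ℝ) : ℂ) *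
      ∫ t in Ioi (0 : ℝ), (f t : ℂ) * (((t ^ ((3 / 2 : ℝ) - 1) : ℝ) : ℂ) * Complex.exp (-fr σ μ * t)))).re := by
  unfold Mn
  rw [mul_left_comm (Complex.exp _), Complex.re_ofReal_mul, ← integral_const_mul (Complex.exp _)]
  congr 1
  have hInt : IntegrableOn (fun t : ℝ => (f t : ℂ) * (((t ^ ((3 / 2 : ℝ) - 1) : ℝ) : ℂ) * Complex.exp (-fr σ μ * t))) (Ioi 0) := by
    obtain ⟨hm, B, hB⟩ := hf
    refine Integrable.bdd_mul (c := B) (integrable_cweight (by norm_num) (by rw [fr_re]; exact hσ)) ?_ ?_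
    · apply Measurable.aestronglyMeasurable
      fun_prop
    · refine (ae_restrict_iff' measurableSet_Ioi).2 (Eventually.of_forall fun t ht => ?_)
      simpa using hB t ht
  have := integral_re (hInt.const_mul (Complex.exp (-φ * Complex.I)))
  simp only [RCLike.re_to_complex] at this
  rw [← this]
  refine setIntegral_congr_fun measurableSet_Ioi fun t _ => ?_
  simp only
  have e1 : Complex.exp (-φ * Complex.I) * ((f t : ℂ) * (((t ^ ((3 / 2 : ℝ) - 1) : ℝ) : ℂ) * Complex.exp (-fr σ μ * t)))
     = ((f t * t ^ ((3 / 2 : ℝ) - 1) : ℝ) : ℂ) * Complex.exp (-fr σ μ * t + (-φ * Complex.I)) := by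
    rw [Complex.exp_add]; push_cast; ring
  rw [e1, Complex.re_ofReal_mul, Complex.exp_re]
  have e2 : (-fr σ μ * t + (-φ * Complex.I)).re = -σ * t := by simp [fr]
  have e3 : (-fr σ μ * t + (-φ * Complex.I)).im = -(2 * π * μ * t + φ) := by simp [fr]; ring
  rw [e2, e3, Real.cos_neg]; ring

lemma Mn_cos_tendsto {μ : ℝ} (hμ : μ ≠ 0) (φ : ℝ) :
    Tendsto (fun σ => Mn σ (fun t => Real.cos (2 * π * μ * t + φ))) (𝓝[>] 0) (𝓝 0) := by
  have h := ((laplace_tendsto (a := 3 / 2) (by norm_num) hμ).const_mul (Complex.exp (-φ * Complex.I)))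
  have h2 := (Complex.continuous_re.tendsto _).comp h
  simp only [mul_zero, Complex.zero_re] at h2
  refine h2.congr' ?_
  filter_upwards [self_mem_nhdsWithin] with σ hσ
  have := Mn_eq_re (BM.const 1) μ φ hσ
  simp only [one_mul, Complex.ofReal_one] at this
  rw [this]; rfl

inductive Cone : (ℝ → ℝ) → Prop
  | zero : Cone (fun _ => 0)
  | step (c μ : ℝ) (f : ℝ → ℝ) (hc : 0 ≤ c) (hμ : 0 ≤ μ) (hf : Cone f) :
      Cone (fun t => c * Real.cos (2 * π * μ * t) + f t)

lemma Cone.add {f g : ℝ → ℝ} (hf : Cone f) (hg : Cone g) : Cone (fun t => f t + g t) := by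
  induction hf with
  | zero => simpa using hg
  | step c μ f hc hμ hf ih =>
    have := Cone.step c μ _ hc hμ ih
    simpa only [add_assoc] using this

lemma Cone.mul_cos {f : ℝ → ℝ} (hf : Cone f) {c μ : ℝ} (hc : 0 ≤ c) (hμ : 0 ≤ μ) :
    Cone (fun t => c * Real.cos (2 * π * μ * t) * f t) := by
  induction hf with
  | zero => simpa using Cone.zero
  | step d ν f hd hν hf ih =>
    have h1 := Cone.step (c * d / 2) (μ + ν) _ (by positivity) (by positivity) ih
    have h2 := Cone.step (c * d / 2) |μ - ν| _ (by positivity) (by positivity) h1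
    convert h2 using 2 with t
    have e1 : Real.cos (2 * π * |μ - ν| * t) = Real.cos (2 * π * μ * t - 2 * π * ν * t) := by
      rcases abs_choice (μ - ν) with h | h
      · rw [h]; ring_nf
      · rw [h, ← Real.cos_neg]; ring_nf
    rw [e1, show 2 * π * (μ + ν) * t = 2 * π * μ * t + 2 * π * ν * t by ring, Real.cos_add, Real.cos_sub]
    ring

lemma Cone.mul {f g : ℝ → ℝ} (hf : Cone f) (hg : Cone g) : Cone (fun t => f t * g t) := by
  induction hf with
  | zero => simpa using Cone.zero
  | step c μ f hc hμ hf ih =>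
    have := (hg.mul_cos hc hμ).add ih
    convert this using 2 with t
    ring

lemma Cone.cos {c μ : ℝ} (hc : 0 ≤ c) (hμ : 0 ≤ μ) : Cone (fun t => c * Real.cos (2 * π * μ * t)) := by
  simpa using Cone.step c μ _ hc hμ Cone.zero

lemma Cone.const {c : ℝ} (hc : 0 ≤ c) : Cone (fun _ => c) := by
  simpa using Cone.cos hc le_rfl

lemma Cone.pow {f : ℝ → ℝ} (hf : Cone f) (n : ℕ) : Cone (fun t => f t ^ n) := by
  induction n with
  | zero => simpa using Cone.const zero_le_one
  | succ n ih => simpa only [pow_succ] using ih.mul hf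

lemma Cone.sum {ι : Type*} (s : Finset ι) (f : ι → ℝ → ℝ) (hf : ∀ i ∈ s, Cone (f i)) :
    Cone (fun t => ∑ i ∈ s, f i t) := by
  classical
  induction s using Finset.induction_on with
  | empty => simpa using Cone.zero
  | insert a s ha ih =>
    simp only [Finset.sum_insert ha]
    exact (hf a (by simp)).add (ih fun i hi => hf i (by simp [hi]))

lemma Cone.bm {f : ℝ → ℝ} (hf : Cone f) : BM f := by
  induction hf with
  | zero => exact BM.const 0
  | step c μ f hc hμ hf ih => exact ((BM.const c).mul (BM.cos' μ)).add ih

lemma Cone.bm_shift {f : ℝ → ℝ} (hf : Cone f) (τ : ℝ) : BM (fun t => f (t - τ)) := by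
  induction hf with
  | zero => exact BM.const 0
  | step c μ f hc hμ hf ih =>
    refine ((BM.const c).mul ?_).add ih
    exact ⟨by fun_prop, 1, fun _ _ => abs_cos_le_one _⟩

lemma Gam_pos : 0 < Real.Gamma (3 / 2) := Real.Gamma_pos_of_pos (by norm_num)

lemma cone_main (F : ℝ → ℝ) (hF : Measurable F) (C : ℝ) (hC : ∀ t, 0 < t → |F t| ≤ C)
    (κ : ℝ) (hκ : 0 < κ) (N : ℝ → ℝ)
    (hN : ∀ μ, 0 < μ → Tendsto (fun σ => Mn σ (fun t => F t * Real.cos (2 * π * μ * t))) (𝓝[>] 0)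
      (𝓝 (-(κ * N μ))))
    (hN2 : ∀ μ, 0 < μ → ∀ B : Finset (ℤ × ℤ), (∀ h ∈ B, rad h = μ) → B.card / μ ^ 2 ≤ N μ)
    (B : Finset (ℤ × ℤ)) (hB : ∀ h ∈ B, 0 < rad h) {f : ℝ → ℝ} (hf : Cone f) :
    ∃ (m ρ : ℝ) (mh : ℤ × ℤ → ℝ) (g : ℝ → ℝ),
      (∀ τ, Tendsto (fun σ => Mn σ (fun t => f (t - τ))) (𝓝[>] 0) (𝓝 m)) ∧
      (∀ h ∈ B, Tendsto (fun σ => Mn σ (fun t => Real.cos (2 * π * rad h * t) * f t)) (𝓝[>] 0) (𝓝 (mh h))) ∧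
      Tendsto g (𝓝[>] 0) (𝓝 ρ) ∧ (∀ σ, 0 < σ → g σ ≤ -Mn σ (fun t => F t * f t)) ∧
      (2 * κ / Real.Gamma (3 / 2)) * ∑ h ∈ B, (1 / rad h ^ 2) * mh h - C * m ≤ ρ := by
  have hFB : BM F := ⟨hF, C, hC⟩
  induction hf with
  | zero =>
    have h0 : ∀ σ, Mn σ (fun _ => 0) = 0 := fun σ => by simp [Mn]
    refine ⟨0, 0, fun _ => 0, fun _ => 0, fun τ => ?_, fun h _ => ?_, tendsto_const_nhds, fun σ _ => ?_, by simp⟩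
    · simp [h0]
    · simp [h0]
    · simp [h0]
  | step c μ f hc hμ hf ih =>
    obtain ⟨m, ρ, mh, g, h1, h2, h3, h4, h5⟩ := ih
    set G := Real.Gamma (3 / 2) with hG
    have hGpos : 0 < G := Gam_pos
    have hone : Tendsto (fun σ => Mn σ (fun _ => 1)) (𝓝[>] 0) (𝓝 G) := by
      refine tendsto_const_nhds.congr' ?_
      filter_upwards [self_mem_nhdsWithin] with σ hσ
      rw [Mn_one hσ]
    refine ⟨c * (if μ = 0 then G else 0) + m, c * (if μ = 0 then -C * G else κ * N μ) + ρ,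
      fun h => c * (if rad h = μ then G / 2 else 0) + mh h,
      fun σ => c * (if μ = 0 then -C * Mn σ (fun _ => 1) else
        -Mn σ (fun t => F t * Real.cos (2 * π * μ * t))) + g σ, fun τ => ?_, fun h hh => ?_, ?_, fun σ hσ => ?_, ?_⟩
    · have hcos : Tendsto (fun σ => Mn σ (fun t => Real.cos (2 * π * μ * (t - τ)))) (𝓝[>] 0)
          (𝓝 (if μ = 0 then G else 0)) := by
        split_ifs with h0
        · simpa [h0] using hone
        · have := Mn_cos_tendsto h0 (-(2 * π * μ * τ))
          refine this.congr fun σ => ?_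
          congr 1
          ext t; ring_nf
      refine ((hcos.const_mul c).add (h1 τ)).congr' ?_
      filter_upwards [self_mem_nhdsWithin] with σ hσ
      have b1 : BM (fun t => Real.cos (2 * π * μ * (t - τ))) := ⟨by fun_prop, 1, fun _ _ => abs_cos_le_one _⟩
      rw [Mn_add ((BM.const c).mul b1) (hf.bm_shift τ) hσ, Mn_const_mul]
    · have hr := hB h hh
      have hcos : Tendsto (fun σ => Mn σ (fun t => Real.cos (2 * π * rad h * t) * Real.cos (2 * π * μ * t))) (𝓝[>] 0)
          (𝓝 (if rad h = μ then G / 2 else 0)) := by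
        have e : ∀ σ, 0 < σ → 1 / 2 * Mn σ (fun t => Real.cos (2 * π * (rad h + μ) * t + 0)) +
            1 / 2 * Mn σ (fun t => Real.cos (2 * π * (rad h - μ) * t + 0)) =
            Mn σ (fun t => Real.cos (2 * π * rad h * t) * Real.cos (2 * π * μ * t)) := by
          intro σ hσ
          rw [← Mn_const_mul, ← Mn_const_mul, ← Mn_add ((BM.const _).mul (BM.cos _ _)) ((BM.const _).mul (BM.cos _ _)) hσ]
          congr 1
          ext t
          rw [show 2 * π * (rad h + μ) * t + 0 = 2 * π * rad h * t + 2 * π * μ * t by ring,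
            show 2 * π * (rad h - μ) * t + 0 = 2 * π * rad h * t - 2 * π * μ * t by ring, Real.cos_add, Real.cos_sub]
          ring
        have t1 := Mn_cos_tendsto (μ := rad h + μ) (by positivity) 0
        have t2 : Tendsto (fun σ => Mn σ (fun t => Real.cos (2 * π * (rad h - μ) * t + 0))) (𝓝[>] 0)
          (𝓝 (if rad h = μ then G else 0)) := by
          split_ifs with h0
          · simpa [h0] using hone
          · exact Mn_cos_tendsto (sub_ne_zero.2 h0) 0
        have t3 := (t1.const_mul (1 / 2)).add (t2.const_mul (1 / 2))
        have e3 : (1 / 2 * 0 + 1 / 2 * (if rad h = μ then G else 0)) = (if rad h = μ then G / 2 else 0) := by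
          split_ifs <;> ring
        rw [e3] at t3
        refine t3.congr' ?_
        filter_upwards [self_mem_nhdsWithin] with σ hσ
        exact e σ hσ
      refine ((hcos.const_mul c).add (h2 h hh)).congr' ?_
      filter_upwards [self_mem_nhdsWithin] with σ hσ
      rw [← Mn_const_mul, ← Mn_add ((BM.const c).mul ((BM.cos' _).mul (BM.cos' _))) ((BM.cos' _).mul hf.bm) hσ]
      congr 1
      ext t; ring
    · refine (Tendsto.const_mul c ?_).add h3
      split_ifs with h0
      · exact hone.const_mul _
      · have := (hN μ (lt_of_le_of_ne hμ (Ne.symm h0))).neg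
        simpa using this
    · have e : Mn σ (fun t => F t * (c * Real.cos (2 * π * μ * t) + f t)) =
          c * Mn σ (fun t => F t * Real.cos (2 * π * μ * t)) + Mn σ (fun t => F t * f t) := by
        rw [← Mn_const_mul, ← Mn_add ((BM.const c).mul (hFB.mul (BM.cos' _))) (hFB.mul hf.bm) hσ]
        congr 1
        ext t; ring
      rw [e]
      have h6 := h4 σ hσ
      have h7 : (if μ = 0 then -C * Mn σ (fun _ => 1) else
        -Mn σ (fun t => F t * Real.cos (2 * π * μ * t))) ≤ -Mn σ (fun t => F t * Real.cos (2 * π * μ * t)) := by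
        split_ifs with h0
        · have : Mn σ (fun t => F t * Real.cos (2 * π * μ * t)) ≤ C * Mn σ (fun _ => 1) := by
            rw [← Mn_const_mul]
            refine Mn_mono (hFB.mul (BM.cos' _)) ((BM.const C).mul (BM.const 1)) hσ fun t ht => ?_
            simp only [h0, mul_zero, zero_mul, Real.cos_zero, mul_one]
            exact (abs_le.1 (hC t ht)).2
          linarith
        · exact le_rfl
      have h8 := mul_le_mul_of_nonneg_left h7 hc
      linarith
    · have key : (2 * κ / G) * ∑ h ∈ B, (1 / rad h ^ 2) * (if rad h = μ then G / 2 else 0)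
          - C * (if μ = 0 then G else 0) ≤ (if μ = 0 then -C * G else κ * N μ) := by
        by_cases h0 : μ = 0
        · have : ∑ h ∈ B, (1 / rad h ^ 2) * (if rad h = μ then G / 2 else 0) = 0 := by
            refine Finset.sum_eq_zero fun h hh => ?_
            rw [if_neg, mul_zero]
            rw [h0]; exact (hB h hh).ne'
          rw [this]
          simp [h0]
        · have hμ' : 0 < μ := lt_of_le_of_ne hμ (Ne.symm h0)
          have e : ∑ h ∈ B, (1 / rad h ^ 2) * (if rad h = μ then G / 2 else 0) =
             (B.filter (fun h => rad h = μ)).card / μ ^ 2 * (G / 2) := by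
            simp only [mul_ite, mul_zero]
            rw [← Finset.sum_filter]
            rw [Finset.sum_congr rfl (g := fun _ => (1 / μ ^ 2) * (G / 2))]
            · simp; ring
            · intro x hx
              rw [(Finset.mem_filter.1 hx).2]
          rw [e, if_neg h0, if_neg h0]
          have := hN2 μ hμ' (B.filter (fun h => rad h = μ)) (fun h hh => (Finset.mem_filter.1 hh).2)
          have h9 := mul_le_mul_of_nonneg_left this hκ.le
          have e2 : ∀ X : ℝ, 2 * κ / G * (X * (G / 2)) = κ * X := by
            intro X; field_simp
          rw [e2]; linarith
      have e4 : ∑ h ∈ B, (1 / rad h ^ 2) * (c * (if rad h = μ then G / 2 else 0) + mh h) =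
          c * ∑ h ∈ B, (1 / rad h ^ 2) * (if rad h = μ then G / 2 else 0) + ∑ h ∈ B, (1 / rad h ^ 2) * mh h := by
        rw [Finset.mul_sum, ← Finset.sum_add_distrib]
        refine Finset.sum_congr rfl fun h _ => ?_
        ring
      rw [e4]
      have h8 := mul_le_mul_of_nonneg_left key hc
      linarith

lemma diverge (K : ℝ) : ∃ B : Finset (ℤ × ℤ), (∀ h ∈ B, 0 < rad h) ∧ K ≤ ∑ h ∈ B, 1 / rad h ^ 2 := by
  have hd : Tendsto (fun n : ℕ => ∑ i ∈ Finset.range n, (1 / ((i : ℝ) + 1))) atTop atTop :=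
    Real.tendsto_sum_range_one_div_nat_succ_atTop
  obtain ⟨n, hn⟩ := (hd.eventually_ge_atTop (2 * K)).exists
  let s : Finset (Σ _ : ℕ, ℕ) := (Finset.range n).sigma fun a => Finset.range (a + 1)
  let e : (Σ _ : ℕ, ℕ) ↪ ℤ × ℤ := ⟨fun p => ((p.1 : ℤ) + 1, (p.2 : ℤ) + 1), by
    rintro ⟨a, b⟩ ⟨c, d⟩ h
    simp at h
    simp [h.1, h.2]⟩
  have hrad : ∀ p, rad (e p) ^ 2 = ((p.1 : ℝ) + 1) ^ 2 + ((p.2 : ℝ) + 1) ^ 2 := by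
    intro p
    unfold rad
    rw [Real.sq_sqrt (by positivity)]
    show (((p.1 : ℤ) + 1 : ℤ) : ℝ) ^ 2 + (((p.2 : ℤ) + 1 : ℤ) : ℝ) ^ 2 = _
    push_cast
    rfl
  refine ⟨s.map e, ?_, ?_⟩
  · intro h hh
    obtain ⟨p, _, rfl⟩ := Finset.mem_map.1 hh
    have h0 : 0 ≤ rad (e p) := Real.sqrt_nonneg _
    have h1 := hrad p
    have h2 : 0 < rad (e p) ^ 2 := by rw [h1]; positivity
    exact lt_of_le_of_ne h0 (fun h => by rw [← h] at h2; norm_num at h2)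
  · rw [Finset.sum_map, Finset.sum_sigma]
    have : ∑ i ∈ Finset.range n, (1 / ((i : ℝ) + 1)) / 2 ≤
        ∑ a ∈ Finset.range n, ∑ b ∈ Finset.range (a + 1), 1 / rad (e ⟨a, b⟩) ^ 2 := by
      refine Finset.sum_le_sum fun a _ => ?_
      have h1 : ∑ b ∈ Finset.range (a + 1), 1 / (2 * ((a : ℝ) + 1) ^ 2) ≤
          ∑ b ∈ Finset.range (a + 1), 1 / rad (e ⟨a, b⟩) ^ 2 := by
        refine Finset.sum_le_sum fun b hb => ?_
        rw [hrad]
        have hb' : (b : ℝ) ≤ a := by exact_mod_cast Nat.lt_succ_iff.1 (Finset.mem_range.1 hb)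
        apply one_div_le_one_div_of_le
        · positivity
        · simp only
          have : (0 : ℝ) ≤ b := by positivity
          nlinarith
      refine le_trans (le_of_eq ?_) h1
      rw [Finset.sum_const, Finset.card_range, nsmul_eq_mul]
      push_cast
      field_simp
    rw [← Finset.sum_div] at this
    linarith

lemma partA (F : ℝ → ℝ) (hF : Measurable F) (C : ℝ) (hC : ∀ t, 0 < t → |F t| ≤ C)
    (κ : ℝ) (hκ : 0 < κ) (N : ℝ → ℝ)
    (hN : ∀ μ, 0 < μ → Tendsto (fun σ => Mn σ (fun t => F t * Real.cos (2 * π * μ * t))) (𝓝[>] 0)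
      (𝓝 (-(κ * N μ))))
    (hN2 : ∀ μ, 0 < μ → ∀ B : Finset (ℤ × ℤ), (∀ h ∈ B, rad h = μ) → B.card / μ ^ 2 ≤ N μ) : False := by
  have hFB : BM F := ⟨hF, C, hC⟩
  have hC0 : 0 ≤ C := (abs_nonneg _).trans (hC 1 one_pos)
  set G := Real.Gamma (3 / 2) with hG
  have hGpos : 0 < G := Gam_pos
  obtain ⟨B, hB, hΛ⟩ := diverge (1 + 2 * C * G / κ)
  set Λ := ∑ h ∈ B, 1 / rad h ^ 2 with hΛdef
  have hΛ1 : 0 < Λ := by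
    have : 0 ≤ 2 * C * G / κ := by positivity
    linarith
  let Φ : ℝ → ℝ := fun t => ∑ h ∈ B, (1 / rad h ^ 2 / Λ / 2 + 1 / rad h ^ 2 / Λ / 2 * Real.cos (2 * π * rad h * t))
  have hΦc : Cone Φ := by
    refine Cone.sum B _ fun h hh => ?_
    have := hB h hh
    exact (Cone.const (by positivity)).add (Cone.cos (by positivity) this.le)
  have hΦ0 : ∀ t, 0 ≤ Φ t := by
    intro t
    refine Finset.sum_nonneg fun h hh => ?_
    have h1 := Real.neg_one_le_cos (2 * π * rad h * t)
    have h2 : 0 ≤ 1 / rad h ^ 2 / Λ / 2 := by positivity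
    nlinarith
  choose a ρ mh g h1 h2 h3 h4 h5 using fun M => cone_main F hF C hC κ hκ N hN hN2 B hB (hΦc.pow M)
  have h1' : ∀ M, Tendsto (fun σ => Mn σ (fun t => Φ t ^ M)) (𝓝[>] 0) (𝓝 (a M)) := by
    intro M
    simpa using h1 M 0
  have ha0 : a 0 = G := by
    refine tendsto_nhds_unique (h1' 0) ?_
    refine tendsto_const_nhds.congr' ?_
    filter_upwards [self_mem_nhdsWithin] with σ hσ
    simp only [pow_zero]
    rw [Mn_one hσ]
  have hapos : ∀ M, 0 ≤ a M := by
    intro M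
    refine ge_of_tendsto (h1' M) ?_
    filter_upwards [self_mem_nhdsWithin] with σ hσ
    have : Mn σ (fun _ => 0) ≤ Mn σ (fun t => Φ t ^ M) :=
      Mn_mono (BM.const 0) (hΦc.pow M).bm hσ fun t _ => pow_nonneg (hΦ0 t) M
    simpa [Mn] using this
  have hρ : ∀ M, ρ M ≤ C * a M := by
    intro M
    refine le_of_tendsto_of_tendsto (h3 M) ((h1' M).const_mul C) ?_
    filter_upwards [self_mem_nhdsWithin] with σ hσ
    refine (h4 M σ hσ).trans ?_
    have : Mn σ (fun t => -1 * (F t * Φ t ^ M)) ≤ Mn σ (fun t => C * Φ t ^ M) := by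
      refine Mn_mono ((BM.const _).mul (hFB.mul (hΦc.pow M).bm)) ((BM.const _).mul (hΦc.pow M).bm) hσ fun t ht => ?_
      have := (abs_le.1 (hC t ht)).1
      have h := pow_nonneg (hΦ0 t) M
      nlinarith
    rw [Mn_const_mul, Mn_const_mul] at this
    linarith
  have hrec : ∀ M, a (M + 1) = ∑ h ∈ B, (1 / rad h ^ 2 / Λ / 2) * (a M + mh M h) := by
    intro M
    have ht : Tendsto (fun σ => ∑ h ∈ B, (1 / rad h ^ 2 / Λ / 2) * (Mn σ (fun t => Φ t ^ M) +
        Mn σ (fun t => Real.cos (2 * π * rad h * t) * Φ t ^ M))) (𝓝[>] 0)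
        (𝓝 (∑ h ∈ B, (1 / rad h ^ 2 / Λ / 2) * (a M + mh M h))) :=
      tendsto_finsetSum _ fun h hh => ((h1' M).add (h2 M h hh)).const_mul _
    refine tendsto_nhds_unique (h1' (M + 1)) (ht.congr' ?_)
    filter_upwards [self_mem_nhdsWithin] with σ hσ
    have key : ∀ B' ⊆ B, Mn σ (fun t => Φ t ^ M * ∑ h ∈ B', (1 / rad h ^ 2 / Λ / 2 + 1 / rad h ^ 2 / Λ / 2 * Real.cos (2 * π * rad h * t))) =
      ∑ h ∈ B', (1 / rad h ^ 2 / Λ / 2) * (Mn σ (fun t => Φ t ^ M) +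
        Mn σ (fun t => Real.cos (2 * π * rad h * t) * Φ t ^ M)) := by
      intro B' hB'
      induction B' using Finset.induction_on with
      | empty => simp [Mn]
      | insert x s hx ih =>
        have hs : s ⊆ B := fun y hy => hB' (by simp [hy])
        have hxB : 0 < rad x := hB x (hB' (by simp))
        have hcs : Cone (fun t => ∑ h ∈ s, (1 / rad h ^ 2 / Λ / 2 + 1 / rad h ^ 2 / Λ / 2 * Real.cos (2 * π * rad h * t))) := by
          refine Cone.sum s _ fun h hh => ?_
          have := hB h (hs hh)
          exact (Cone.const (by positivity)).add (Cone.cos (by positivity) this.le)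
        rw [Finset.sum_insert hx, ← ih hs, ← Mn_add (hΦc.pow M).bm ((BM.cos' _).mul (hΦc.pow M).bm) hσ, ← Mn_const_mul,
          ← Mn_add ((BM.const _).mul ((hΦc.pow M).bm.add ((BM.cos' _).mul (hΦc.pow M).bm))) ((hΦc.pow M).bm.mul hcs.bm) hσ]
        congr 1
        ext t
        rw [Finset.sum_insert hx]
        ring
    rw [← key B (Finset.Subset.refl _)]
    congr 1
  have hdecay : ∀ M, a (M + 1) ≤ 3 / 4 * a M := by
    intro M
    have e : a (M + 1) = a M / 2 + (∑ h ∈ B, (1 / rad h ^ 2) * mh M h) / (2 * Λ) := by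
      rw [hrec M]
      have e1 : ∑ h ∈ B, 1 / rad h ^ 2 / Λ / 2 * (a M + mh M h) =
        (∑ h ∈ B, 1 / rad h ^ 2) * (a M / (2 * Λ)) + (∑ h ∈ B, (1 / rad h ^ 2) * mh M h) / (2 * Λ) := by
        rw [Finset.sum_mul, Finset.sum_div, ← Finset.sum_add_distrib]
        refine Finset.sum_congr rfl fun h _ => ?_
        field_simp
      rw [e1, ← hΛdef]
      field_simp
    have h6 := (h5 M)
    have h7 := hρ M
    have h8 := hapos M
    set X := ∑ h ∈ B, (1 / rad h ^ 2) * mh M h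
    have h9 : 2 * κ / G * X ≤ 2 * C * a M := by linarith
    have h10 : X ≤ C * G / κ * a M := by
      have : X = (2 * κ / G * X) * (G / (2 * κ)) := by field_simp
      rw [this]
      calc _ ≤ (2 * C * a M) * (G / (2 * κ)) := by gcongr
        _ = _ := by field_simp
    have h11 : X ≤ Λ / 2 * a M := h10.trans (by
      refine mul_le_mul_of_nonneg_right ?_ h8
      have : 2 * C * G / κ = 2 * (C * G / κ) := by ring
      linarith)
    rw [e]
    have : X / (2 * Λ) ≤ a M / 4 := by
      rw [div_le_iff₀ (by positivity)]
      linarith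
    linarith
  have hdec : ∀ M, a M ≤ (3 / 4) ^ M * G := by
    intro M
    induction M with
    | zero => simp [ha0]
    | succ M ih =>
      rw [pow_succ]
      linarith [hdecay M]
  let u : ℝ → (B → ℝ × ℝ) := fun t h => (Real.cos (2 * π * rad h * t), Real.sin (2 * π * rad h * t))
  have htb : TotallyBounded (Set.range u) := by
    refine (isCompact_closedBall (0 : B → ℝ × ℝ) 1).totallyBounded.subset ?_
    rintro _ ⟨t, rfl⟩
    rw [mem_closedBall_zero_iff, pi_norm_le_iff_of_nonneg zero_le_one]
    intro h
    rw [Prod.norm_def]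
    exact max_le (abs_cos_le_one _) (abs_sin_le_one _)
  obtain ⟨T, hTs, hTf, hTc⟩ := Metric.finite_approx_of_totallyBounded htb (1 / 2) (by norm_num)
  have : ∃ T' : Finset ℝ, ∀ t, ∃ τ ∈ T', dist (u t) (u τ) < 1 / 2 := by
    have hTs' : ∀ y, ∃ t, y ∈ T → u t = y := fun y => by
      by_cases hy : y ∈ T
      · obtain ⟨t, ht⟩ := hTs hy
        exact ⟨t, fun _ => ht⟩
      · exact ⟨0, fun h => absurd h hy⟩
    choose v hv using hTs'
    refine ⟨hTf.toFinset.image v, fun t => ?_⟩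
    obtain ⟨y, hy, hyt⟩ := mem_iUnion₂.1 (hTc (mem_range_self t))
    refine ⟨v y, Finset.mem_image_of_mem _ (hTf.mem_toFinset.2 hy), ?_⟩
    rw [hv y hy]
    exact hyt
  obtain ⟨T', hT'⟩ := this
  have hΦlow : ∀ t, ∃ τ ∈ T', 7 / 8 ≤ Φ (t - τ) := by
    intro t
    obtain ⟨τ, hτ, hd⟩ := hT' t
    refine ⟨τ, hτ, ?_⟩
    have hsum1 : ∑ h ∈ B, (7 / 8 : ℝ) * (1 / rad h ^ 2 / Λ) = 7 / 8 := by
      rw [← Finset.mul_sum, ← Finset.sum_div, ← hΛdef, div_self hΛ1.ne', mul_one]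
    rw [← hsum1]
    refine Finset.sum_le_sum fun h hh => ?_
    have hd1 := (dist_le_pi_dist (u t) (u τ) ⟨h, hh⟩).trans hd.le
    rw [Prod.dist_eq, max_le_iff] at hd1
    simp only [u, Real.dist_eq] at hd1
    have hw : 0 ≤ 1 / rad h ^ 2 / Λ := by positivity
    have hcos : 3 / 4 ≤ Real.cos (2 * π * rad h * (t - τ)) := by
      rw [show 2 * π * rad h * (t - τ) = 2 * π * rad h * t - 2 * π * rad h * τ by ring, Real.cos_sub]
      have e1 := Real.sin_sq_add_cos_sq (2 * π * rad h * t)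
      have e2 := Real.sin_sq_add_cos_sq (2 * π * rad h * τ)
      have e3 := sq_le_sq' (abs_le.1 hd1.1).1 (abs_le.1 hd1.1).2
      have e4 := sq_le_sq' (abs_le.1 hd1.2).1 (abs_le.1 hd1.2).2
      nlinarith
    nlinarith
  have hlow : ∀ M, (7 / 8) ^ M * G ≤ T'.card * a M := by
    intro M
    have ht : Tendsto (fun σ => ∑ τ ∈ T', Mn σ (fun t => Φ (t - τ) ^ M)) (𝓝[>] 0) (𝓝 (∑ τ ∈ T', a M)) :=
      tendsto_finsetSum _ fun τ _ => h1 M τ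
    rw [Finset.sum_const, nsmul_eq_mul] at ht
    refine ge_of_tendsto ht ?_
    filter_upwards [self_mem_nhdsWithin] with σ hσ
    have key : ∀ Tfs : Finset ℝ, BM (fun t => ∑ τ ∈ Tfs, Φ (t - τ) ^ M) ∧ Mn σ (fun t => ∑ τ ∈ Tfs, Φ (t - τ) ^ M) = ∑ τ ∈ Tfs, Mn σ (fun t => Φ (t - τ) ^ M) := by
      intro Tfs
      induction Tfs using Finset.induction_on with
      | empty => exact ⟨by simpa using BM.const 0, by simp [Mn]⟩
      | insert x s hx ih =>
        simp only [Finset.sum_insert hx]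
        refine ⟨((hΦc.pow M).bm_shift x).add ih.1, ?_⟩
        rw [Mn_add ((hΦc.pow M).bm_shift x) ih.1 hσ, ih.2]
    rw [← (key T').2, hG, ← Mn_one hσ, ← Mn_const_mul]
    refine Mn_mono ((BM.const _).mul (BM.const 1)) (key T').1 hσ fun t _ => ?_
    obtain ⟨τ, hτ, h⟩ := hΦlow t
    rw [mul_one]
    refine le_trans (pow_le_pow_left₀ (by norm_num) h M) ?_
    exact Finset.single_le_sum (f := fun τ => Φ (t - τ) ^ M) (fun i _ => pow_nonneg (hΦ0 _) M) hτ
  have hb : ∀ M : ℕ, (7 / 6 : ℝ) ^ M ≤ T'.card := by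
    intro M
    have h6 := (hlow M).trans (mul_le_mul_of_nonneg_left (hdec M) (Nat.cast_nonneg _))
    have e : (7 / 8 : ℝ) ^ M = (7 / 6) ^ M * (3 / 4) ^ M := by rw [← mul_pow]; norm_num
    rw [e] at h6
    have hp : 0 < (3 / 4 : ℝ) ^ M * G := by positivity
    rw [mul_assoc] at h6
    exact le_of_mul_le_mul_right h6 hp
  obtain ⟨M, hM⟩ := ((tendsto_pow_atTop_atTop_of_one_lt (r := (7 / 6 : ℝ)) (by norm_num)).eventually_gt_atTop (T'.card : ℝ)).exists
  exact absurd (hb M) (not_le.2 hM)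

lemma rad_nonneg (p : ℤ × ℤ) : 0 ≤ rad p := Real.sqrt_nonneg _

lemma rad_sq (p : ℤ × ℤ) : rad p ^ 2 = (p.1 : ℝ) ^ 2 + (p.2 : ℝ) ^ 2 := by
  unfold rad
  rw [Real.sq_sqrt (by positivity)]

lemma rad_ge (p : ℤ × ℤ) : (|(p.1 : ℝ)| + |(p.2 : ℝ)|) / 2 ≤ rad p := by
  apply Real.le_sqrt_of_sq_le
  rw [← sq_abs (p.1 : ℝ), ← sq_abs (p.2 : ℝ)]
  nlinarith [sq_nonneg (|(p.1 : ℝ)| - |(p.2 : ℝ)|), abs_nonneg (p.1 : ℝ), abs_nonneg (p.2 : ℝ),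
    sq_nonneg (|(p.1 : ℝ)|), sq_nonneg (|(p.2 : ℝ)|)]

lemma summable_exp_abs {c : ℝ} (hc : 0 < c) : Summable (fun n : ℤ => rexp (-c * |(n : ℝ)|)) := by
  have h : Summable (fun n : ℕ => rexp (n * (-c))) := Real.summable_exp_nat_mul_iff.2 (by linarith)
  apply Summable.of_nat_of_neg
  · simpa [mul_comm] using h
  · simpa [mul_comm] using h

lemma summable_exp_sq {c : ℝ} (hc : 0 < c) : Summable (fun n : ℤ => rexp (-c * (n : ℝ) ^ 2)) := by
  refine Summable.of_nonneg_of_le (fun _ => (exp_pos _).le) (fun n => ?_) (summable_exp_abs hc)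
  apply Real.exp_le_exp.2
  have : |(n : ℝ)| ≤ (n : ℝ) ^ 2 := by
    have h : |n| ≤ n ^ 2 := by
      rw [← sq_abs]
      rcases eq_or_ne n 0 with rfl | hn
      · simp
      · have := Int.one_le_abs hn
        nlinarith
    exact_mod_cast h
  nlinarith

lemma summable_exp_rad {c : ℝ} (hc : 0 < c) : Summable (fun p : ℤ × ℤ => rexp (-c * rad p)) := by
  have h := summable_exp_abs (c := c / 2) (by linarith)
  refine Summable.of_nonneg_of_le (fun _ => (exp_pos _).le) (fun p => ?_)
    (h.mul_of_nonneg h (fun _ => (exp_pos _).le) (fun _ => (exp_pos _).le))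
  rw [← Real.exp_add]
  apply Real.exp_le_exp.2
  have := rad_ge p
  nlinarith

lemma summable_one_sq : Summable (fun n : ℤ => (1 + (n : ℝ) ^ 2) ^ (-(3 / 4) : ℝ)) := by
  have h := Real.summable_abs_int_rpow (b := 3 / 2) (by norm_num)
  refine Summable.of_norm_bounded_eventually h ?_
  have : ∀ᶠ n : ℤ in cofinite, n ≠ 0 := by
    rw [eventually_cofinite]; simp
  filter_upwards [this] with n hn
  have hn' : 0 < |(n : ℝ)| := by simpa using hn
  rw [Real.norm_of_nonneg (by positivity)]
  have e : |(n : ℝ)| ^ (-(3 / 2) : ℝ) = ((n : ℝ) ^ 2) ^ (-(3 / 4) : ℝ) := by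
    rw [← sq_abs (n : ℝ), ← Real.rpow_natCast |(n : ℝ)| 2, ← Real.rpow_mul hn'.le]; norm_num
  rw [e]
  apply Real.rpow_le_rpow_of_nonpos
  · rw [← sq_abs]; positivity
  · linarith
  · norm_num

lemma summable_rad : Summable (fun p : ℤ × ℤ => (1 + rad p ^ 2) ^ (-(3 / 2) : ℝ)) := by
  have h := summable_one_sq
  refine Summable.of_nonneg_of_le (fun _ => by positivity) (fun p => ?_)
    (h.mul_of_nonneg h (fun _ => by positivity) (fun _ => by positivity))
  rw [← Real.mul_rpow (by positivity) (by positivity)]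
  have e : (1 + rad p ^ 2) ^ (-(3 / 2) : ℝ) = ((1 + rad p ^ 2) ^ 2) ^ (-(3 / 4) : ℝ) := by
    rw [← Real.rpow_natCast (1 + rad p ^ 2) 2, ← Real.rpow_mul (by positivity)]; norm_num
  rw [e]
  apply Real.rpow_le_rpow_of_nonpos
  · positivity
  · rw [rad_sq]
    nlinarith [sq_nonneg (p.1 : ℝ), sq_nonneg (p.2 : ℝ), mul_nonneg (sq_nonneg (p.1 : ℝ)) (sq_nonneg (p.2 : ℝ))]
  · norm_num

lemma glasser_int {s r : ℝ} (hs : 0 < s) :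
    IntegrableOn (fun y : ℝ => y ^ (-(1 / 2) : ℝ) * rexp (-(s ^ 2 * y) - r ^ 2 / (4 * y))) (Ioi 0) := by
  have := integrable_weight (a := 1 / 2) (σ := s ^ 2) (by norm_num) (by positivity)
  refine Integrable.mono this ?_ ?_
  · apply Measurable.aestronglyMeasurable
    fun_prop
  · refine (ae_restrict_iff' measurableSet_Ioi).2 (Eventually.of_forall fun y hy => ?_)
    have hy : 0 < y := hy
    rw [Real.norm_of_nonneg (by positivity), Real.norm_of_nonneg (by positivity)]
    norm_num
    gcongr
    have : 0 ≤ r ^ 2 / (4 * y) := by positivity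
    linarith

lemma glasser {s r : ℝ} (hs : 0 < s) (hr : 0 ≤ r) :
    ∫ y in Ioi (0 : ℝ), y ^ (-(1 / 2) : ℝ) * rexp (-(s ^ 2 * y) - r ^ 2 / (4 * y)) = √π / s * rexp (-s * r) := by
  rcases hr.eq_or_lt with rfl | hr
  · have := Real.integral_rpow_mul_exp_neg_mul_Ioi (a := 1 / 2) (r := s ^ 2) (by norm_num) (by positivity)
    norm_num at this ⊢
    rw [this, Gamma_one_half_eq, Real.inv_rpow (by positivity), ← Real.sqrt_eq_rpow, Real.sqrt_sq hs.le]
    field_simp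
  set K := ∫ y in Ioi (0 : ℝ), y ^ (-(1 / 2) : ℝ) * rexp (-(s ^ 2 * y) - r ^ 2 / (4 * y)) with hK
  have hinv_img : (fun y : ℝ => r ^ 2 / (4 * s ^ 2 * y)) '' Ioi 0 = Ioi 0 := by
    ext z
    constructor
    · rintro ⟨y, hy, rfl⟩
      have : (0 : ℝ) < y := hy
      show (0 : ℝ) < _
      positivity
    · intro hz
      have hz : (0 : ℝ) < z := hz
      refine ⟨r ^ 2 / (4 * s ^ 2 * z), ?_, ?_⟩
      · show (0 : ℝ) < _
        positivity
      · simp only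
        field_simp
  have hinv_d : ∀ y ∈ Ioi (0 : ℝ), HasDerivWithinAt (fun y : ℝ => r ^ 2 / (4 * s ^ 2 * y)) (-(r ^ 2 / (4 * s ^ 2 * y ^ 2))) (Ioi 0) y := by
    intro y hy
    have hy : (0 : ℝ) < y := hy
    apply HasDerivAt.hasDerivWithinAt
    have h := ((hasDerivAt_inv hy.ne').const_mul (r ^ 2 / (4 * s ^ 2)))
    have e : (fun y : ℝ => r ^ 2 / (4 * s ^ 2 * y)) = (fun y => r ^ 2 / (4 * s ^ 2) * y⁻¹) := by
      ext z; rw [← div_div, div_eq_mul_inv]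
    rw [e]
    refine HasDerivAt.congr_deriv h ?_
    field_simp
  have hinv_inj : InjOn (fun y : ℝ => r ^ 2 / (4 * s ^ 2 * y)) (Ioi 0) := by
    intro y hy z hz h
    have hy : (0 : ℝ) < y := hy
    have hz : (0 : ℝ) < z := hz
    simp only at h
    field_simp at h
    linarith
  have hcong : ∀ y ∈ Ioi (0 : ℝ), |(-(r ^ 2 / (4 * s ^ 2 * y ^ 2)))| • ((r ^ 2 / (4 * s ^ 2 * y)) ^ (-(1 / 2) : ℝ) *
      rexp (-(s ^ 2 * (r ^ 2 / (4 * s ^ 2 * y))) - r ^ 2 / (4 * (r ^ 2 / (4 * s ^ 2 * y))))) =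
      (r / (2 * s)) * (y ^ (-(3 / 2) : ℝ) * rexp (-(s ^ 2 * y) - r ^ 2 / (4 * y))) := by
    intro y hy
    have hy : (0 : ℝ) < y := hy
    have e1 : -(s ^ 2 * (r ^ 2 / (4 * s ^ 2 * y))) - r ^ 2 / (4 * (r ^ 2 / (4 * s ^ 2 * y))) = -(s ^ 2 * y) - r ^ 2 / (4 * y) := by
      field_simp; ring
    have e2 : (r ^ 2 / (4 * s ^ 2 * y)) ^ (-(1 / 2) : ℝ) = (2 * s / r) * y ^ (1 / 2 : ℝ) := by
      have : r ^ 2 / (4 * s ^ 2 * y) = ((2 * s / r) ^ 2 * y)⁻¹ := by field_simp; ring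
      rw [this, Real.rpow_neg (by positivity), Real.inv_rpow (by positivity), inv_inv, Real.mul_rpow (by positivity) (by positivity),
        ← Real.sqrt_eq_rpow, Real.sqrt_sq (by positivity)]
    have e3 : y ^ (-(3 / 2) : ℝ) = y ^ (1 / 2 : ℝ) / y ^ 2 := by
      rw [← Real.rpow_natCast y 2, ← Real.rpow_sub hy]; norm_num
    rw [e1, e2, e3, abs_neg, abs_of_pos (by positivity), smul_eq_mul]
    field_simp
    norm_num
  have hK2 : K = (r / (2 * s)) * ∫ y in Ioi (0 : ℝ), y ^ (-(3 / 2) : ℝ) * rexp (-(s ^ 2 * y) - r ^ 2 / (4 * y)) := by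
    rw [hK, ← integral_const_mul]
    conv_lhs => rw [← hinv_img]
    rw [integral_image_eq_integral_abs_deriv_smul measurableSet_Ioi hinv_d hinv_inj]
    exact setIntegral_congr_fun measurableSet_Ioi hcong
  have hI2 : IntegrableOn (fun y : ℝ => (r / (2 * s)) * (y ^ (-(3 / 2) : ℝ) * rexp (-(s ^ 2 * y) - r ^ 2 / (4 * y)))) (Ioi 0) := by
    have h := glasser_int (r := r) hs
    rw [← hinv_img, integrableOn_image_iff_integrableOn_abs_deriv_smul measurableSet_Ioi hinv_d hinv_inj] at h
    exact h.congr_fun hcong measurableSet_Ioi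
  have hm_img : (fun y : ℝ => s * √y - r / (2 * √y)) '' Ioi 0 = univ := by
    refine eq_univ_of_forall fun v => ?_
    set q := √(v ^ 2 + 2 * s * r) with hq
    have hq2 : q ^ 2 = v ^ 2 + 2 * s * r := Real.sq_sqrt (by positivity)
    have hqv : 0 < v + q := by
      have hq0 : 0 ≤ q := Real.sqrt_nonneg _
      have : |v| < q := by
        apply Real.lt_sqrt_of_sq_lt
        rw [sq_abs]
        have : 0 < 2 * s * r := by positivity
        linarith
      linarith [neg_abs_le v]
    have hu : 0 < (v + q) / (2 * s) := by positivity
    refine ⟨((v + q) / (2 * s)) ^ 2, ?_, ?_⟩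
    · show (0 : ℝ) < _
      positivity
    · simp only
      rw [Real.sqrt_sq hu.le]
      field_simp
      nlinarith
  have hm_d : ∀ y ∈ Ioi (0 : ℝ), HasDerivWithinAt (fun y : ℝ => s * √y - r / (2 * √y)) (s / 2 * y ^ (-(1 / 2) : ℝ) + r / 4 * y ^ (-(3 / 2) : ℝ)) (Ioi 0) y := by
    intro y hy
    have hy : (0 : ℝ) < y := hy
    have hsq : 0 < √y := Real.sqrt_pos.2 hy
    apply HasDerivAt.hasDerivWithinAt
    have h1 := (Real.hasDerivAt_sqrt hy.ne').const_mul s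
    have h2 := ((Real.hasDerivAt_sqrt hy.ne').inv hsq.ne').const_mul (r / 2)
    have h3 := h1.sub h2
    have e : (fun y : ℝ => s * √y - r / (2 * √y)) = ((fun y => s * √y) - fun y => r / 2 * (√y)⁻¹) := by
      ext z; simp only [Pi.sub_apply]; rw [← div_div, div_eq_mul_inv _ (√z)]
    rw [e]
    refine HasDerivAt.congr_deriv h3 ?_
    have e1 : y ^ (-(1 / 2) : ℝ) = 1 / √y := by
      rw [Real.rpow_neg hy.le, ← Real.sqrt_eq_rpow, one_div]
    have e2 : y ^ (-(3 / 2) : ℝ) = 1 / (√y * √y ^ 2) := by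
      rw [Real.rpow_neg hy.le, one_div, Real.sq_sqrt hy.le, show (3 / 2 : ℝ) = 1 / 2 + 1 by norm_num, Real.rpow_add hy, ← Real.sqrt_eq_rpow, rpow_one]
    rw [e1, e2]
    field_simp
    ring
  have hm_inj : InjOn (fun y : ℝ => s * √y - r / (2 * √y)) (Ioi 0) := by
    apply StrictMonoOn.injOn
    intro y hy z hz h
    have hy : (0 : ℝ) < y := hy
    have h1 : √y < √z := Real.sqrt_lt_sqrt hy.le h
    have hsq : 0 < √y := Real.sqrt_pos.2 hy
    have h2 : r / (2 * √z) < r / (2 * √y) := by gcongr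
    simp only
    nlinarith
  have hgauss : ∫ v : ℝ, rexp (-1 * v ^ 2) = √π := by rw [integral_gaussian]; simp
  rw [← setIntegral_univ, ← hm_img, integral_image_eq_integral_abs_deriv_smul measurableSet_Ioi hm_d hm_inj] at hgauss
  have hcong2 : ∀ y ∈ Ioi (0 : ℝ), |s / 2 * y ^ (-(1 / 2) : ℝ) + r / 4 * y ^ (-(3 / 2) : ℝ)| • rexp (-1 * (s * √y - r / (2 * √y)) ^ 2) =
      rexp (s * r) * (s / 2 * (y ^ (-(1 / 2) : ℝ) * rexp (-(s ^ 2 * y) - r ^ 2 / (4 * y)))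
        + s / 2 * ((r / (2 * s)) * (y ^ (-(3 / 2) : ℝ) * rexp (-(s ^ 2 * y) - r ^ 2 / (4 * y))))) := by
    intro y hy
    have hy : (0 : ℝ) < y := hy
    have hsq : 0 < √y := Real.sqrt_pos.2 hy
    have e : -1 * (s * √y - r / (2 * √y)) ^ 2 = s * r + (-(s ^ 2 * y) - r ^ 2 / (4 * y)) := by
      have : y = √y ^ 2 := (Real.sq_sqrt hy.le).symm
      rw [this, Real.sqrt_sq hsq.le]
      field_simp
      ring
    rw [e, Real.exp_add, abs_of_pos (by positivity), smul_eq_mul]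
    field_simp
    ring
  rw [setIntegral_congr_fun measurableSet_Ioi hcong2, integral_const_mul,
    integral_add ((glasser_int hs).const_mul _) (hI2.const_mul _), integral_const_mul, integral_const_mul, integral_const_mul, ← hK2, ← hK] at hgauss
  rw [neg_mul, Real.exp_neg, ← hgauss]
  field_simp
  ring

lemma summable_hardy_real {s : ℝ} (hs : 0 < s) :
    Summable (fun p : ℤ × ℤ => (s ^ 2 + 4 * π ^ 2 * rad p ^ 2) ^ (-(3 / 2) : ℝ)) := by
  set c := min (s ^ 2) (4 * π ^ 2) with hc
  have hc0 : 0 < c := by positivity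
  refine Summable.of_nonneg_of_le (fun _ => by positivity) (fun p => ?_) (summable_rad.mul_left (c ^ (-(3 / 2) : ℝ)))
  rw [← Real.mul_rpow hc0.le (by positivity)]
  apply Real.rpow_le_rpow_of_nonpos (by positivity)
  · have h1 : c ≤ s ^ 2 := min_le_left _ _
    have h2 : c ≤ 4 * π ^ 2 := min_le_right _ _
    nlinarith [sq_nonneg (rad p)]
  · norm_num

lemma theta_pt {y : ℝ} (hy : 0 < y) :
    ∑' p : ℤ × ℤ, rexp (-(4 * π ^ 2 * rad p ^ 2) * y) = 1 / (4 * π * y) * ∑' p : ℤ × ℤ, rexp (-(rad p ^ 2 / (4 * y))) := by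
  have h1 := Real.tsum_exp_neg_mul_int_sq (a := 4 * π * y) (by positivity)
  have A : ∀ c : ℝ, 0 < c → ∑' p : ℤ × ℤ, rexp (-c * rad p ^ 2) = (∑' n : ℤ, rexp (-c * (n : ℝ) ^ 2)) ^ 2 := by
    intro c hc
    have hsum : Summable (fun n : ℤ => ‖rexp (-c * (n : ℝ) ^ 2)‖) := by
      simpa using summable_exp_sq hc
    rw [sq, tsum_mul_tsum_of_summable_norm hsum hsum]
    congr 1
    ext p
    rw [← Real.exp_add, rad_sq]
    ring_nf
  have e1 : ∑' p : ℤ × ℤ, rexp (-(4 * π ^ 2 * rad p ^ 2) * y) = ∑' p : ℤ × ℤ, rexp (-(4 * π ^ 2 * y) * rad p ^ 2) := by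
    congr 1; ext p; ring_nf
  have e2 : ∑' p : ℤ × ℤ, rexp (-(rad p ^ 2 / (4 * y))) = ∑' p : ℤ × ℤ, rexp (-(1 / (4 * y)) * rad p ^ 2) := by
    congr 1; ext p; ring_nf
  rw [e1, e2, A _ (by positivity), A _ (by positivity)]
  have e3 : ∑' n : ℤ, rexp (-(4 * π ^ 2 * y) * (n : ℝ) ^ 2) = ∑' n : ℤ, rexp (-π * (4 * π * y) * (n : ℝ) ^ 2) := by
    congr 1; ext p; ring_nf
  have e4 : ∑' n : ℤ, rexp (-(1 / (4 * y)) * (n : ℝ) ^ 2) = ∑' n : ℤ, rexp (-π / (4 * π * y) * (n : ℝ) ^ 2) := by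
    congr 1; ext p
    have : -(1 / (4 * y)) = -π / (4 * π * y) := by field_simp
    rw [this]
  rw [e3, e4, h1, mul_pow, div_pow, one_pow, ← Real.sqrt_eq_rpow, Real.sq_sqrt (by positivity)]

lemma hardy_real {s : ℝ} (hs : 0 < s) :
    ∑' p : ℤ × ℤ, rexp (-s * rad p) = 2 * π * s * ∑' p : ℤ × ℤ, (s ^ 2 + 4 * π ^ 2 * rad p ^ 2) ^ (-(3 / 2) : ℝ) := by
  let f : ℤ × ℤ → ℝ → ℝ := fun p y => y ^ ((3 / 2 : ℝ) - 1) * rexp (-((s ^ 2 + 4 * π ^ 2 * rad p ^ 2)) * y)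
  let g : ℤ × ℤ → ℝ → ℝ := fun p y => 1 / (4 * π) * (y ^ (-(1 / 2) : ℝ) * rexp (-(s ^ 2 * y) - rad p ^ 2 / (4 * y)))
  have hGam : Real.Gamma (3 / 2) = √π / 2 := by
    rw [show (3 / 2 : ℝ) = 1 / 2 + 1 by norm_num, Real.Gamma_add_one (by norm_num), Gamma_one_half_eq]; ring
  have fi : ∀ p, ∫ y in Ioi (0 : ℝ), f p y = (s ^ 2 + 4 * π ^ 2 * rad p ^ 2) ^ (-(3 / 2) : ℝ) * (√π / 2) := by
    intro p
    have h := Real.integral_rpow_mul_exp_neg_mul_Ioi (a := 3 / 2) (r := s ^ 2 + 4 * π ^ 2 * rad p ^ 2) (by norm_num) (by positivity)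
    simp only [f, neg_mul]
    rw [h, hGam, one_div, Real.inv_rpow (by positivity), Real.rpow_neg (by positivity)]
  have gi : ∀ p, ∫ y in Ioi (0 : ℝ), g p y = 1 / (4 * π) * (√π / s * rexp (-s * rad p)) := by
    intro p
    simp only [g]
    rw [integral_const_mul, glasser hs (rad_nonneg p)]
  have hf : HasSum (fun p => ∫ y in Ioi (0 : ℝ), f p y) (∫ y in Ioi (0 : ℝ), ∑' p, f p y) := by
    apply hasSum_integral_of_summable_integral_norm
    · intro p; exact integrable_weight (by norm_num) (by positivity)
    · have : ∀ p, ∫ y in Ioi (0 : ℝ), ‖f p y‖ = ∫ y in Ioi (0 : ℝ), f p y := by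
        intro p
        refine setIntegral_congr_fun measurableSet_Ioi fun y hy => ?_
        have hy : 0 < y := hy
        exact Real.norm_of_nonneg (by positivity)
      simp only [this, fi]
      exact (summable_hardy_real hs).mul_right _
  have hg : HasSum (fun p => ∫ y in Ioi (0 : ℝ), g p y) (∫ y in Ioi (0 : ℝ), ∑' p, g p y) := by
    apply hasSum_integral_of_summable_integral_norm
    · intro p; exact (glasser_int hs).const_mul _
    · have : ∀ p, ∫ y in Ioi (0 : ℝ), ‖g p y‖ = ∫ y in Ioi (0 : ℝ), g p y := by
        intro p
        refine setIntegral_congr_fun measurableSet_Ioi fun y hy => ?_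
        have hy : 0 < y := hy
        exact Real.norm_of_nonneg (by positivity)
      simp only [this, gi]
      exact ((summable_exp_rad hs).mul_left _).mul_left _
  have hfg : ∫ y in Ioi (0 : ℝ), ∑' p, f p y = ∫ y in Ioi (0 : ℝ), ∑' p, g p y := by
    refine setIntegral_congr_fun measurableSet_Ioi fun y hy => ?_
    have hy : 0 < y := hy
    have e1 : ∑' p, f p y = y ^ ((3 / 2 : ℝ) - 1) * rexp (-(s ^ 2 * y)) * ∑' p : ℤ × ℤ, rexp (-(4 * π ^ 2 * rad p ^ 2) * y) := by
      rw [← tsum_mul_left]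
      congr 1; ext p
      simp only [f]
      rw [mul_assoc (y ^ ((3 / 2 : ℝ) - 1)), ← Real.exp_add]
      ring_nf
    have e2 : ∑' p, g p y = 1 / (4 * π) * y ^ (-(1 / 2) : ℝ) * rexp (-(s ^ 2 * y)) * ∑' p : ℤ × ℤ, rexp (-(rad p ^ 2 / (4 * y))) := by
      rw [← tsum_mul_left]
      congr 1; ext p
      simp only [g]
      rw [mul_assoc (1 / (4 * π) * y ^ (-(1 / 2) : ℝ)), ← Real.exp_add]
      ring_nf
    rw [e1, e2, theta_pt hy]
    have e3 : y ^ ((3 / 2 : ℝ) - 1) = y ^ (-(1 / 2) : ℝ) * y := by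
      rw [← Real.rpow_add_one hy.ne']; norm_num
    rw [e3]
    field_simp
  have hfin := hf.tsum_eq.trans (hfg.trans hg.tsum_eq.symm)
  simp only [fi, gi] at hfin
  rw [tsum_mul_right, tsum_mul_left, tsum_mul_left] at hfin
  have hpi : 0 < √π := Real.sqrt_pos.2 pi_pos
  field_simp at hfin
  simp only [neg_mul]
  linarith

lemma norm_sq_add_ge1 {s : ℂ} (hs : 0 ≤ s.re) {x : ℝ} : s.re * (|s.im| + |x|) ≤ ‖s ^ 2 + ((x ^ 2 : ℝ) : ℂ)‖ := by
  have e : s ^ 2 + ((x ^ 2 : ℝ) : ℂ) = (s + x * Complex.I) * (s - x * Complex.I) := by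
    have := Complex.I_sq
    push_cast
    linear_combination ((x : ℂ) ^ 2) * this
  rw [e, norm_mul]
  have h1 : s.re ≤ ‖s + x * Complex.I‖ := by
    have := Complex.re_le_norm (s + x * Complex.I); simpa using this
  have h2 : s.re ≤ ‖s - x * Complex.I‖ := by
    have := Complex.re_le_norm (s - x * Complex.I); simpa using this
  have h3 : |s.im + x| ≤ ‖s + x * Complex.I‖ := by
    have := Complex.abs_im_le_norm (s + x * Complex.I); simpa using this
  have h4 : |s.im - x| ≤ ‖s - x * Complex.I‖ := by
    have := Complex.abs_im_le_norm (s - x * Complex.I); simpa using this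
  have h5 : |s.im| + |x| = |s.im + x| ∨ |s.im| + |x| = |s.im - x| := by
    rcases abs_cases s.im with ⟨a1, b1⟩ | ⟨a1, b1⟩ <;> rcases abs_cases x with ⟨a2, b2⟩ | ⟨a2, b2⟩ <;>
    rcases abs_cases (s.im + x) with ⟨a3, b3⟩ | ⟨a3, b3⟩ <;> rcases abs_cases (s.im - x) with ⟨a4, b4⟩ | ⟨a4, b4⟩ <;>
    first | (left; linarith) | (right; linarith)
  rcases h5 with h5 | h5
  · rw [h5, mul_comm]
    exact mul_le_mul h3 h2 hs (norm_nonneg _)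
  · rw [h5]
    exact mul_le_mul h1 h4 (abs_nonneg _) (norm_nonneg _)

lemma norm_sq_add_ge2 (s : ℂ) (x : ℝ) : x ^ 2 - ‖s‖ ^ 2 ≤ ‖s ^ 2 + ((x ^ 2 : ℝ) : ℂ)‖ := by
  have h := norm_sub_norm_le ((x ^ 2 : ℝ) : ℂ) (-s ^ 2)
  rw [Complex.norm_real, Real.norm_of_nonneg (by positivity), norm_neg, norm_pow] at h
  rw [add_comm]
  simpa using h

lemma norm_sq_add_ge3 {s : ℂ} (hs : 0 < s.re) (x : ℝ) : s.re ^ 2 ≤ ‖s ^ 2 + ((x ^ 2 : ℝ) : ℂ)‖ := by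
  have e : s ^ 2 + ((x ^ 2 : ℝ) : ℂ) = (s + x * Complex.I) * (s - x * Complex.I) := by
    have := Complex.I_sq
    push_cast
    linear_combination ((x : ℂ) ^ 2) * this
  rw [e, norm_mul, sq]
  have h1 : s.re ≤ ‖s + x * Complex.I‖ := by
    have := Complex.re_le_norm (s + x * Complex.I); simpa using this
  have h2 : s.re ≤ ‖s - x * Complex.I‖ := by
    have := Complex.re_le_norm (s - x * Complex.I); simpa using this
  exact mul_le_mul h1 h2 hs.le (norm_nonneg _)

lemma slit_sq {s : ℂ} (hs : 0 < s.re) (x : ℝ) : s ^ 2 + ((x ^ 2 : ℝ) : ℂ) ∈ Complex.slitPlane := by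
  rw [Complex.mem_slitPlane_iff]
  by_cases h : s.im = 0
  · left
    rw [Complex.add_re, Complex.ofReal_re, sq, Complex.mul_re, h]
    nlinarith [sq_nonneg x]
  · right
    rw [Complex.add_im, Complex.ofReal_im, sq, Complex.mul_im]
    have : s.re * s.im ≠ 0 := mul_ne_zero hs.ne' h
    intro h2
    apply this
    linarith

/-- the terms of the dual series -/
noncomputable def hz (s : ℂ) (p : ℤ × ℤ) : ℂ :=
  (s ^ 2 + (((2 * π * rad p) ^ 2 : ℝ) : ℂ)) ^ ((-(3 / 2) : ℝ) : ℂ)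

lemma hz_bound {s : ℂ} {σ R : ℝ} (hσ : 0 < σ) (hs : σ ≤ s.re) (hR : ‖s‖ ≤ R) (p : ℤ × ℤ) :
    ‖hz s p‖ ≤ (1 / (1 + (1 + R ^ 2) / σ ^ 2)) ^ (-(3 / 2) : ℝ) * (1 + rad p ^ 2) ^ (-(3 / 2) : ℝ) := by
  unfold hz
  rw [Complex.norm_cpow_real, ← Real.mul_rpow (by positivity) (by positivity)]
  apply Real.rpow_le_rpow_of_nonpos (by positivity) _ (by norm_num)
  set z := ‖s ^ 2 + (((2 * π * rad p) ^ 2 : ℝ) : ℂ)‖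
  have h2 : (2 * π * rad p) ^ 2 - ‖s‖ ^ 2 ≤ z := norm_sq_add_ge2 s _
  have h3 : s.re ^ 2 ≤ z := norm_sq_add_ge3 (hσ.trans_le hs) _
  have h4 : σ ^ 2 ≤ z := (by gcongr : σ ^ 2 ≤ s.re ^ 2).trans h3
  have h5 : ‖s‖ ^ 2 ≤ R ^ 2 := by gcongr
  rw [div_mul_eq_mul_div, one_mul, div_le_iff₀ (by positivity), mul_add, mul_one]
  have h6 : 1 + R ^ 2 ≤ z * ((1 + R ^ 2) / σ ^ 2) := by
    rw [mul_div_assoc', le_div_iff₀ (by positivity), mul_comm]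
    gcongr
  have h7 : rad p ^ 2 ≤ (2 * π * rad p) ^ 2 := by
    have := rad_nonneg p
    have := pi_gt_three
    gcongr
    nlinarith
  linarith

lemma hardy {s : ℂ} (hs : 0 < s.re) :
    ∑' p : ℤ × ℤ, Complex.exp (-s * rad p) = 2 * π * s * ∑' p : ℤ × ℤ, hz s p := by
  have hopen : IsOpen {s : ℂ | 0 < s.re} := isOpen_lt continuous_const Complex.continuous_re
  have hU : ∀ s₀ : ℂ, 0 < s₀.re → IsOpen {s : ℂ | s₀.re / 2 < s.re ∧ ‖s‖ < ‖s₀‖ + 1} ∧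
      s₀ ∈ {s : ℂ | s₀.re / 2 < s.re ∧ ‖s‖ < ‖s₀‖ + 1} := by
    intro s₀ h
    refine ⟨(isOpen_lt continuous_const Complex.continuous_re).inter (isOpen_lt continuous_norm continuous_const), ?_, ?_⟩
    · linarith
    · linarith
  have h1 : AnalyticOnNhd ℂ (fun s : ℂ => ∑' p : ℤ × ℤ, Complex.exp (-s * rad p)) {s : ℂ | 0 < s.re} := by
    apply DifferentiableOn.analyticOnNhd _ hopen
    intro s₀ hs₀
    have hs₀ : 0 < s₀.re := hs₀
    apply DifferentiableAt.differentiableWithinAt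
    have hd := Complex.differentiableOn_tsum_of_summable_norm
      (F := fun (p : ℤ × ℤ) (s : ℂ) => Complex.exp (-s * rad p))
      (summable_exp_rad (c := s₀.re / 2) (by linarith)) (fun p => by fun_prop) (hU s₀ hs₀).1 (by
        rintro p w ⟨hw, _⟩
        rw [Complex.norm_exp]
        apply Real.exp_le_exp.2
        have := rad_nonneg p
        simp
        nlinarith)
    exact hd.differentiableAt ((hU s₀ hs₀).1.mem_nhds (hU s₀ hs₀).2)
  have h2 : AnalyticOnNhd ℂ (fun s : ℂ => 2 * π * s * ∑' p : ℤ × ℤ, hz s p) {s : ℂ | 0 < s.re} := by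
    apply DifferentiableOn.analyticOnNhd _ hopen
    intro s₀ hs₀
    have hs₀ : 0 < s₀.re := hs₀
    apply DifferentiableAt.differentiableWithinAt
    refine DifferentiableAt.mul (by fun_prop) ?_
    have hd := Complex.differentiableOn_tsum_of_summable_norm
      (F := fun (p : ℤ × ℤ) (s : ℂ) => hz s p)
      (summable_rad.mul_left ((1 / (1 + (1 + (‖s₀‖ + 1) ^ 2) / (s₀.re / 2) ^ 2)) ^ (-(3 / 2) : ℝ))) (fun p => by
        intro w hw
        have hw0 : 0 < w.re := by have := hw.1; linarith
        apply DifferentiableAt.differentiableWithinAt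
        unfold hz
        exact DifferentiableAt.cpow_const (by fun_prop) (slit_sq hw0 _)) (hU s₀ hs₀).1 (by
        rintro p w ⟨hw, hw2⟩
        exact hz_bound (by linarith) hw.le hw2.le p)
    exact hd.differentiableAt ((hU s₀ hs₀).1.mem_nhds (hU s₀ hs₀).2)
  have hconn : IsPreconnected {s : ℂ | 0 < s.re} := (convex_halfSpace_re_gt 0).isPreconnected
  refine h1.eqOn_of_preconnected_of_frequently_eq h2 hconn (z₀ := 1) (by simp) ?_ hs
  have htend : Tendsto (fun n : ℕ => ((1 + 1 / ((n : ℝ) + 1) : ℝ) : ℂ)) atTop (𝓝[≠] 1) := by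
    apply tendsto_nhdsWithin_of_tendsto_nhds_of_eventually_within
    · have := (tendsto_one_div_add_atTop_nhds_zero_nat (𝕜 := ℝ)).const_add 1
      rw [add_zero] at this
      exact_mod_cast (Complex.continuous_ofReal.tendsto 1).comp this
    · refine Eventually.of_forall fun n => ?_
      have : (1 + 1 / ((n : ℝ) + 1) : ℝ) ≠ 1 := by
        have : (0:ℝ) < 1 / ((n : ℝ) + 1) := by positivity
        linarith
      simp only [mem_compl_iff, mem_singleton_iff]
      exact_mod_cast this
  refine htend.frequently (Frequently.of_forall fun n => ?_)
  set r : ℝ := 1 + 1 / ((n : ℝ) + 1) with hr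
  have hr0 : 0 < r := by positivity
  have hreal := congrArg (fun x : ℝ => (x : ℂ)) (hardy_real hr0)
  push_cast at hreal
  simp only [hz]
  convert hreal using 4 with p p
  rw [Complex.ofReal_cpow (by positivity)]
  push_cast
  ring_nf

lemma real_mul_cpow {r : ℝ} (hr : 0 < r) {w : ℂ} (hw : w ≠ 0) (a : ℝ) :
    ((r : ℂ) * w) ^ (a : ℂ) = ((r ^ a : ℝ) : ℂ) * w ^ (a : ℂ) := by
  have hr' : (r : ℂ) ≠ 0 := by exact_mod_cast hr.ne'
  rw [Complex.cpow_def_of_ne_zero (mul_ne_zero hr' hw), Complex.log_ofReal_mul hr hw, add_mul, Complex.exp_add,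
    Complex.cpow_def_of_ne_zero hw, Real.rpow_def_of_pos hr]
  push_cast
  rfl

noncomputable def cnt (μ : ℝ) : ℝ := ∑' p : ℤ × ℤ, if rad p = μ then (1 : ℝ) else 0

lemma cnt_summable (μ : ℝ) : Summable (fun p : ℤ × ℤ => if rad p = μ then (1 : ℝ) else 0) := by
  refine Summable.of_nonneg_of_le (fun p => by split_ifs <;> norm_num) (fun p => ?_)
    (summable_rad.mul_left ((1 + μ ^ 2) ^ (3 / 2 : ℝ)))
  split_ifs with h
  · rw [h, ← Real.rpow_add (by positivity)]
    norm_num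
  · positivity

lemma cnt_ge (μ : ℝ) (B : Finset (ℤ × ℤ)) (hB : ∀ h ∈ B, rad h = μ) : (B.card : ℝ) ≤ cnt μ := by
  have h := (cnt_summable μ).sum_le_tsum B (fun p _ => by split_ifs <;> norm_num)
  rw [Finset.sum_congr rfl (g := fun _ => (1 : ℝ)) (fun p hp => if_pos (hB p hp))] at h
  simpa [cnt] using h

lemma tannery1 {μ : ℝ} (hμ : 0 < μ) :
    Tendsto (fun σ : ℝ => ∑' p : ℤ × ℤ, ((σ ^ (3 / 2 : ℝ) : ℝ) : ℂ) * hz (fr σ μ) p) (𝓝[>] 0)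
      (𝓝 (∑' p : ℤ × ℤ, if rad p = μ then (((2 : ℝ) : ℂ) * (((2 * π * μ : ℝ) : ℂ) * Complex.I)) ^ ((-(3 / 2) : ℝ) : ℂ) else 0)) := by
  set τ := 2 * π * μ with hτ
  have hτ0 : 0 < τ := by positivity
  have hI : ∀ᶠ σ : ℝ in 𝓝[>] 0, 0 < σ ∧ σ < 1 := Ioo_mem_nhdsGT one_pos
  have hnorm : ∀ σ : ℝ, 0 < σ → ∀ p, ‖((σ ^ (3 / 2 : ℝ) : ℝ) : ℂ) * hz (fr σ μ) p‖ =
      σ ^ (3 / 2 : ℝ) * ‖(fr σ μ) ^ 2 + (((2 * π * rad p) ^ 2 : ℝ) : ℂ)‖ ^ (-(3 / 2) : ℝ) := by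
    intro σ hσ p
    rw [norm_mul, Complex.norm_real, Real.norm_of_nonneg (by positivity), hz, Complex.norm_cpow_real]
  refine tendsto_tsum_of_dominated_convergence
    (bound := fun p => (1 / (1 + (1 + (1 + τ) ^ 2) / τ)) ^ (-(3 / 2) : ℝ) * (1 + rad p ^ 2) ^ (-(3 / 2) : ℝ))
    (summable_rad.mul_left _) ?_ ?_
  · intro p
    by_cases h : rad p = μ
    · rw [if_pos h]
      have hc : Tendsto (fun σ : ℝ => ((σ : ℂ) + ((2 : ℝ) : ℂ) * ((τ : ℂ) * Complex.I)) ^ ((-(3 / 2) : ℝ) : ℂ)) (𝓝[>] 0)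
          (𝓝 ((((2 : ℝ) : ℂ) * ((τ : ℂ) * Complex.I)) ^ ((-(3 / 2) : ℝ) : ℂ))) := by
        have hs : ((2 : ℝ) : ℂ) * ((τ : ℂ) * Complex.I) ∈ Complex.slitPlane := by
          rw [Complex.mem_slitPlane_iff]; right
          simp [hτ0.ne']
        have h1 : Tendsto (fun σ : ℝ => ((σ : ℂ) + ((2 : ℝ) : ℂ) * ((τ : ℂ) * Complex.I))) (𝓝[>] 0) (𝓝 (((2 : ℝ) : ℂ) * ((τ : ℂ) * Complex.I))) := by
          have : Continuous (fun σ : ℝ => ((σ : ℂ) + ((2 : ℝ) : ℂ) * ((τ : ℂ) * Complex.I))) := by fun_prop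
          have h := (this.tendsto 0).mono_left (nhdsWithin_le_nhds (s := Ioi (0:ℝ)))
          simpa using h
        exact (continuousAt_cpow_const hs).tendsto.comp h1
      refine hc.congr' ?_
      filter_upwards [self_mem_nhdsWithin] with σ hσ
      have hσ : 0 < σ := hσ
      have e : (fr σ μ) ^ 2 + (((2 * π * rad p) ^ 2 : ℝ) : ℂ) = (σ : ℂ) * ((σ : ℂ) + ((2 : ℝ) : ℂ) * ((τ : ℂ) * Complex.I)) := by
        rw [h, ← hτ, fr, ← hτ]
        push_cast
        linear_combination ((τ : ℂ) ^ 2) * Complex.I_sq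
      have hne : ((σ : ℂ) + ((2 : ℝ) : ℂ) * ((τ : ℂ) * Complex.I)) ≠ 0 := by
        intro h0
        have := congrArg Complex.re h0
        simp at this
        exact hσ.ne' this
      have e5 : ((σ ^ (3 / 2 : ℝ) : ℝ) : ℂ) * ((σ ^ (-(3 / 2) : ℝ) : ℝ) : ℂ) = 1 := by
        rw [← Complex.ofReal_mul, ← Real.rpow_add hσ]
        norm_num
      rw [hz, e, real_mul_cpow hσ hne]
      linear_combination (-(((σ : ℂ) + ((2 : ℝ) : ℂ) * ((τ : ℂ) * Complex.I)) ^ ((-(3 / 2) : ℝ) : ℂ))) * e5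
    · rw [if_neg h, tendsto_zero_iff_norm_tendsto_zero]
      have hlim : Tendsto (fun σ : ℝ => ‖(fr σ μ) ^ 2 + (((2 * π * rad p) ^ 2 : ℝ) : ℂ)‖) (𝓝[>] 0)
          (𝓝 ‖((τ : ℂ) * Complex.I) ^ 2 + (((2 * π * rad p) ^ 2 : ℝ) : ℂ)‖) :=
        (((fr_tendsto μ).pow 2).add_const _).norm
      have hne : ‖((τ : ℂ) * Complex.I) ^ 2 + (((2 * π * rad p) ^ 2 : ℝ) : ℂ)‖ ≠ 0 := by
        rw [norm_ne_zero_iff, mul_pow, Complex.I_sq]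
        have : (τ : ℂ) ^ 2 * -1 + (((2 * π * rad p) ^ 2 : ℝ) : ℂ) = (((2 * π * rad p) ^ 2 - τ ^ 2 : ℝ) : ℂ) := by
          push_cast; ring
        rw [this]
        have h2 : (2 * π * rad p) ^ 2 - τ ^ 2 ≠ 0 := by
          intro h0
          apply h
          have h3 : (2 * π * rad p) ^ 2 = τ ^ 2 := by linarith
          have h4 := (sq_eq_sq₀ (by have := rad_nonneg p; positivity) hτ0.le).1 h3
          rw [hτ] at h4
          exact mul_left_cancel₀ (by positivity) h4
        exact_mod_cast h2
      have h2 := (Real.continuousAt_rpow_const _ (-(3 / 2) : ℝ) (Or.inl hne)).tendsto.comp hlim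
      have h3 := (rpow_tendsto_zero (a := 3 / 2) (by norm_num)).mul h2
      rw [zero_mul] at h3
      refine h3.congr' ?_
      filter_upwards [self_mem_nhdsWithin] with σ hσ
      rw [hnorm σ hσ p]
      rfl
  · filter_upwards [hI] with σ hσ p
    obtain ⟨hσ, hσ1⟩ := hσ
    rw [hnorm σ hσ p, ← Real.mul_rpow (by positivity) (by positivity)]
    set z := ‖(fr σ μ) ^ 2 + (((2 * π * rad p) ^ 2 : ℝ) : ℂ)‖ with hz
    have h1 : σ * τ ≤ z := by
      have := norm_sq_add_ge1 (s := fr σ μ) (by rw [fr_re]; exact hσ.le) (x := 2 * π * rad p)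
      rw [fr_re, fr_im, ← hτ, abs_of_pos hτ0] at this
      refine le_trans ?_ this
      have := abs_nonneg (2 * π * rad p)
      nlinarith
    have h2 : (2 * π * rad p) ^ 2 - ‖fr σ μ‖ ^ 2 ≤ z := norm_sq_add_ge2 _ _
    have h3 : ‖fr σ μ‖ ≤ 1 + τ := by
      have := norm_add_le (σ : ℂ) ((τ : ℂ) * Complex.I)
      rw [norm_mul, Complex.norm_I, mul_one, Complex.norm_real, Complex.norm_real, Real.norm_of_nonneg hσ.le, Real.norm_of_nonneg hτ0.le] at this
      rw [fr, ← hτ]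
      linarith
    have h4 : ‖fr σ μ‖ ^ 2 ≤ (1 + τ) ^ 2 := by gcongr
    have hz0 : 0 < z := lt_of_lt_of_le (by positivity) h1
    have e : σ ^ (3 / 2 : ℝ) * z ^ (-(3 / 2) : ℝ) = (z / σ) ^ (-(3 / 2) : ℝ) := by
      rw [Real.div_rpow hz0.le hσ.le, Real.rpow_neg hσ.le, div_inv_eq_mul, mul_comm]
    rw [e]
    apply Real.rpow_le_rpow_of_nonpos (by positivity) _ (by norm_num)
    have h5 : τ ≤ z / σ := by rw [le_div_iff₀ hσ]; linarith
    have h6 : z ≤ z / σ := by rw [le_div_iff₀ hσ]; nlinarith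
    rw [div_mul_eq_mul_div, one_mul, div_le_iff₀ (by positivity), mul_add, mul_one]
    have h8 : 1 + (1 + τ) ^ 2 ≤ z / σ * ((1 + (1 + τ) ^ 2) / τ) := by
      rw [mul_div_assoc', le_div_iff₀ (by positivity), mul_comm]
      gcongr
    have h7 : rad p ^ 2 ≤ (2 * π * rad p) ^ 2 := by
      have := rad_nonneg p
      have := pi_gt_three
      gcongr
      nlinarith
    linarith

noncomputable def kap : ℝ := 2 * √π * (2 * π) * 2 ^ (-(3 / 2) : ℝ) / (2 * π) ^ 2

lemma kap_pos : 0 < kap := by unfold kap; positivity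

lemma main_tendsto {μ : ℝ} (hμ : 0 < μ) :
    Tendsto (fun σ : ℝ => ((σ ^ (3 / 2 : ℝ) : ℝ) : ℂ) *
      ∑' p : ℤ × ℤ, (2 * √π : ℝ) * (fr σ μ) ^ ((-(3 / 2) : ℝ) : ℂ) * Complex.exp (-fr σ μ * rad p)) (𝓝[>] 0)
      (𝓝 ((-(kap * (cnt μ / μ ^ 2)) : ℝ) : ℂ)) := by
  set τ := 2 * π * μ with hτ
  have hτ0 : 0 < τ := by positivity
  have h1 := tannery1 hμ
  have h2 := ((continuousAt_cpow_const (b := ((-(3 / 2) : ℝ) : ℂ)) (slit_fr hμ.ne')).tendsto.comp (fr_tendsto μ))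
  have h3 := ((h2.const_mul ((2 * √π : ℝ) : ℂ)).mul ((fr_tendsto μ).const_mul (2 * π : ℂ))).mul h1
  have hsum : (∑' p : ℤ × ℤ, if rad p = μ then (((2 : ℝ) : ℂ) * (((2 * π * μ : ℝ) : ℂ) * Complex.I)) ^ ((-(3 / 2) : ℝ) : ℂ) else 0) =
     (((2 : ℝ) : ℂ) * ((τ : ℂ) * Complex.I)) ^ ((-(3 / 2) : ℝ) : ℂ) * (cnt μ : ℂ) := by
    unfold cnt
    rw [Complex.ofReal_tsum, ← tsum_mul_left]
    congr 1; ext p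
    split_ifs <;> simp [hτ]
  have hTI : (τ : ℂ) * Complex.I ≠ 0 := by simp [hτ0.ne']
  have hlim : ((2 * √π : ℝ) : ℂ) * ((τ : ℂ) * Complex.I) ^ ((-(3 / 2) : ℝ) : ℂ) * ((2 * π : ℂ) * ((τ : ℂ) * Complex.I)) *
      (∑' p : ℤ × ℤ, if rad p = μ then (((2 : ℝ) : ℂ) * (((2 * π * μ : ℝ) : ℂ) * Complex.I)) ^ ((-(3 / 2) : ℝ) : ℂ) else 0)
      = ((-(kap * (cnt μ / μ ^ 2)) : ℝ) : ℂ) := by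
    rw [hsum, real_mul_cpow two_pos hTI]
    have e : ((τ : ℂ) * Complex.I) ^ ((-(3 / 2) : ℝ) : ℂ) * ((τ : ℂ) * Complex.I) * ((τ : ℂ) * Complex.I) ^ ((-(3 / 2) : ℝ) : ℂ) = -(1 / (τ : ℂ) ^ 2) := by
      have e1 : ((τ : ℂ) * Complex.I) ^ ((-(3 / 2) : ℝ) : ℂ) * ((τ : ℂ) * Complex.I) ^ ((-(3 / 2) : ℝ) : ℂ) = ((τ : ℂ) * Complex.I) ^ (-(3 : ℕ) : ℂ) := by
        rw [← Complex.cpow_add _ _ hTI]; congr 1; push_cast; ring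
      rw [mul_right_comm, e1, Complex.cpow_neg, Complex.cpow_natCast]
      have hI3 : Complex.I ^ 3 = -Complex.I := by rw [pow_succ, Complex.I_sq]; ring
      have hτc : (τ : ℂ) ≠ 0 := by exact_mod_cast hτ0.ne'
      rw [mul_pow, hI3]
      have := Complex.I_ne_zero
      field_simp
    have e2 : ((2 * √π : ℝ) : ℂ) * ((τ : ℂ) * Complex.I) ^ ((-(3 / 2) : ℝ) : ℂ) * ((2 * π : ℂ) * ((τ : ℂ) * Complex.I)) *
       ((((2 : ℝ) ^ (-(3 / 2) : ℝ) : ℝ) : ℂ) * ((τ : ℂ) * Complex.I) ^ ((-(3 / 2) : ℝ) : ℂ) * (cnt μ : ℂ)) =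
       ((2 * √π * (2 * π) * 2 ^ (-(3 / 2) : ℝ) * cnt μ : ℝ) : ℂ) *
       (((τ : ℂ) * Complex.I) ^ ((-(3 / 2) : ℝ) : ℂ) * ((τ : ℂ) * Complex.I) * ((τ : ℂ) * Complex.I) ^ ((-(3 / 2) : ℝ) : ℂ)) := by
      push_cast; ring
    rw [e2, e]
    have e3 : -(1 / (τ : ℂ) ^ 2) = ((-(1 / τ ^ 2) : ℝ) : ℂ) := by push_cast; ring
    rw [e3, ← Complex.ofReal_mul]
    congr 1
    unfold kap
    rw [hτ]
    field_simp
  rw [← hτ] at h3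
  rw [hlim] at h3
  refine h3.congr' ?_
  filter_upwards [self_mem_nhdsWithin] with σ hσ
  rw [tsum_mul_left, tsum_mul_left, hardy (by rw [fr_re]; exact hσ)]
  simp only [Function.comp]
  ring

lemma sum_quarter (N : ℕ) : ∑ n ∈ Finset.range N, (1 + (n : ℝ)) ^ (-(1 / 4) : ℝ) ≤ 4 / 3 * (N : ℝ) ^ (3 / 4 : ℝ) := by
  induction N with
  | zero => simp
  | succ n ih =>
    rw [Finset.sum_range_succ]
    have hn : (0 : ℝ) < (n : ℝ) + 1 := by positivity
    have hb := rpow_one_add_le_one_add_mul_self (s := -(1 / ((n : ℝ) + 1))) (p := 3 / 4) (by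
      have : 1 / ((n : ℝ) + 1) ≤ 1 := by rw [div_le_one hn]; have : (0 : ℝ) ≤ n := by positivity
                                         linarith
      linarith) (by norm_num) (by norm_num)
    have e1 : 1 + -(1 / ((n : ℝ) + 1)) = n / (n + 1) := by field_simp; ring
    rw [e1, Real.div_rpow (by positivity) hn.le, div_le_iff₀ (by positivity)] at hb
    have e2 : ((n : ℝ) + 1) ^ (3 / 4 : ℝ) = ((n : ℝ) + 1) * (1 + (n : ℝ)) ^ (-(1 / 4) : ℝ) := by
      rw [add_comm (1 : ℝ), mul_comm, ← Real.rpow_add_one hn.ne']; norm_num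
    have e3 : (1 + 3 / 4 * -(1 / ((n : ℝ) + 1))) * ((n : ℝ) + 1) ^ (3 / 4 : ℝ) =
       ((n : ℝ) + 1) ^ (3 / 4 : ℝ) - 3 / 4 * (1 + (n : ℝ)) ^ (-(1 / 4) : ℝ) := by
      rw [e2]; field_simp; ring
    rw [e3] at hb
    push_cast
    linarith

lemma geom_bound {x : ℝ} (hx : 0 < x) (hx1 : x ≤ 1) : ∑' n : ℕ, rexp (-x * n) ≤ 2 / x := by
  have h : ∀ n : ℕ, rexp (-x * n) = rexp (-x) ^ n := fun n => by rw [← Real.exp_nat_mul]; ring_nf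
  simp only [h]
  rw [tsum_geometric_of_lt_one (exp_pos _).le (by rw [Real.exp_lt_one_iff]; linarith)]
  have h1 : rexp (-x) ≤ 1 / (1 + x) := by
    rw [Real.exp_neg, ← one_div]
    apply one_div_le_one_div_of_le (by linarith)
    linarith [Real.add_one_le_exp x]
  have h2 : x / 2 ≤ 1 - rexp (-x) := by
    have : 1 - 1 / (1 + x) = x / (1 + x) := by field_simp; ring
    have h3 : x / 2 ≤ x / (1 + x) := by gcongr; linarith
    linarith
  rw [← one_div]
  calc 1 / (1 - rexp (-x)) ≤ 1 / (x / 2) := one_div_le_one_div_of_le (by positivity) h2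
    _ = 2 / x := by field_simp

lemma geom_summable {x : ℝ} (hx : 0 < x) : Summable (fun n : ℕ => rexp (-x * n)) := by
  have h : Summable (fun n : ℕ => rexp (n * (-x))) := Real.summable_exp_nat_mul_iff.2 (by linarith)
  simpa [mul_comm] using h

lemma oneD_nat {σ : ℝ} (hσ : 0 < σ) (hσ1 : σ ≤ 1) :
    Summable (fun n : ℕ => (1 + (n : ℝ)) ^ (-(1 / 4) : ℝ) * rexp (-(σ / 2) * n)) ∧
    ∑' n : ℕ, (1 + (n : ℝ)) ^ (-(1 / 4) : ℝ) * rexp (-(σ / 2) * n) ≤ 12 * σ ^ (-(3 / 4) : ℝ) := by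
  set N := ⌈1 / σ⌉₊ with hN
  have hNge : 1 / σ ≤ N := Nat.le_ceil _
  have hNle : (N : ℝ) ≤ 2 / σ := by
    have := Nat.ceil_lt_add_one (a := 1 / σ) (by positivity)
    have h2 : 1 ≤ 1 / σ := by rw [le_div_iff₀ hσ]; linarith
    have : (2 : ℝ) / σ = 1 / σ + 1 / σ := by ring
    linarith
  let u : ℕ → ℝ := fun n => if n ∈ Finset.range N then (1 + (n : ℝ)) ^ (-(1 / 4) : ℝ) else 0
  have hu : HasSum u (∑ n ∈ Finset.range N, (1 + (n : ℝ)) ^ (-(1 / 4) : ℝ)) := by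
    have : HasSum u (∑ b ∈ Finset.range N, u b) := hasSum_sum_of_ne_finset_zero (fun b hb => if_neg hb)
    rwa [Finset.sum_congr rfl (g := fun n : ℕ => (1 + (n : ℝ)) ^ (-(1 / 4) : ℝ)) (fun b hb => if_pos hb)] at this
  have hg := geom_summable (x := σ / 2) (by positivity)
  have hle : ∀ n : ℕ, (1 + (n : ℝ)) ^ (-(1 / 4) : ℝ) * rexp (-(σ / 2) * n) ≤ u n + σ ^ (1 / 4 : ℝ) * rexp (-(σ / 2) * n) := by
    intro n
    by_cases hn : n ∈ Finset.range N
    · simp only [u, if_pos hn]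
      have h1 : rexp (-(σ / 2) * n) ≤ 1 := by
        rw [Real.exp_le_one_iff]
        have : 0 ≤ σ / 2 * n := by positivity
        linarith
      have h2 : (1 + (n : ℝ)) ^ (-(1 / 4) : ℝ) * rexp (-(σ / 2) * n) ≤ (1 + (n : ℝ)) ^ (-(1 / 4) : ℝ) :=
        mul_le_of_le_one_right (by positivity) h1
      have : 0 ≤ σ ^ (1 / 4 : ℝ) * rexp (-(σ / 2) * n) := by positivity
      linarith
    · simp only [u, if_neg hn, zero_add]
      refine mul_le_mul_of_nonneg_right ?_ (exp_pos _).le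
      have h3 : (N : ℝ) ≤ n := by
        have := Finset.mem_range.not.1 hn
        exact_mod_cast not_lt.1 this
      have h4 : σ ^ (1 / 4 : ℝ) = (1 / σ) ^ (-(1 / 4) : ℝ) := by
        rw [one_div σ, Real.inv_rpow hσ.le, Real.rpow_neg hσ.le, inv_inv]
      rw [h4]
      apply Real.rpow_le_rpow_of_nonpos (by positivity) _ (by norm_num)
      linarith
  have hsum2 : Summable (fun n : ℕ => u n + σ ^ (1 / 4 : ℝ) * rexp (-(σ / 2) * n)) := hu.summable.add (hg.mul_left _)
  have hs := Summable.of_nonneg_of_le (fun n : ℕ => (by positivity : (0:ℝ) ≤ (1 + (n : ℝ)) ^ (-(1 / 4) : ℝ) * rexp (-(σ / 2) * n))) hle hsum2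
  refine ⟨hs, (hs.tsum_le_tsum hle hsum2).trans ?_⟩
  rw [hu.summable.tsum_add (hg.mul_left _), hu.tsum_eq, tsum_mul_left]
  have h1 := sum_quarter N
  have h2 : (N : ℝ) ^ (3 / 4 : ℝ) ≤ 2 * σ ^ (-(3 / 4) : ℝ) := by
    calc (N : ℝ) ^ (3 / 4 : ℝ) ≤ (2 / σ) ^ (3 / 4 : ℝ) := by gcongr
      _ = 2 ^ (3 / 4 : ℝ) * σ ^ (-(3 / 4) : ℝ) := by
        rw [Real.div_rpow (by norm_num) hσ.le, Real.rpow_neg hσ.le, div_eq_mul_inv]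
      _ ≤ _ := by
        gcongr
        calc (2 : ℝ) ^ (3 / 4 : ℝ) ≤ 2 ^ (1 : ℝ) := Real.rpow_le_rpow_of_exponent_le (by norm_num) (by norm_num)
          _ = 2 := by norm_num
  have h3 := geom_bound (x := σ / 2) (by positivity) (by linarith)
  have h4 : σ ^ (1 / 4 : ℝ) * ∑' n : ℕ, rexp (-(σ / 2) * n) ≤ 4 * σ ^ (-(3 / 4) : ℝ) := by
    calc _ ≤ σ ^ (1 / 4 : ℝ) * (2 / (σ / 2)) := by gcongr
      _ = _ := by
        have : σ ^ (1 / 4 : ℝ) = σ ^ (-(3 / 4) : ℝ) * σ := by rw [← Real.rpow_add_one hσ.ne']; norm_num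
        rw [this]; field_simp; norm_num
  have : 0 ≤ σ ^ (-(3 / 4) : ℝ) := by positivity
  linarith

lemma oneD {σ : ℝ} (hσ : 0 < σ) (hσ1 : σ ≤ 1) :
    Summable (fun n : ℤ => (1 + |(n : ℝ)|) ^ (-(1 / 4) : ℝ) * rexp (-(σ / 2) * |(n : ℝ)|)) ∧
    ∑' n : ℤ, (1 + |(n : ℝ)|) ^ (-(1 / 4) : ℝ) * rexp (-(σ / 2) * |(n : ℝ)|) ≤ 24 * σ ^ (-(3 / 4) : ℝ) := by
  obtain ⟨hs, hb⟩ := oneD_nat hσ hσ1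
  let f : ℤ → ℝ := fun n => (1 + |(n : ℝ)|) ^ (-(1 / 4) : ℝ) * rexp (-(σ / 2) * |(n : ℝ)|)
  have h1 : (fun n : ℕ => f n) = (fun n : ℕ => (1 + (n : ℝ)) ^ (-(1 / 4) : ℝ) * rexp (-(σ / 2) * n)) := by
    ext n; simp [f]
  have h2 : (fun n : ℕ => f (-n)) = (fun n : ℕ => (1 + (n : ℝ)) ^ (-(1 / 4) : ℝ) * rexp (-(σ / 2) * n)) := by
    ext n; simp [f]
  have s1 : Summable (fun n : ℕ => f n) := by rw [h1]; exact hs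
  have s2 : Summable (fun n : ℕ => f (-n)) := by rw [h2]; exact hs
  refine ⟨Summable.of_nat_of_neg s1 s2, ?_⟩
  have h3 := Summable.tsum_of_nat_of_neg s1 s2
  show ∑' n, f n ≤ _
  rw [h3, h1, h2]
  have : f 0 = 1 := by simp [f]
  rw [this]
  linarith

lemma rad_pos_ge {p : ℤ × ℤ} (hp : rad p ≠ 0) : (1 + |(p.1 : ℝ)|) * (1 + |(p.2 : ℝ)|) ≤ 9 * rad p ^ 2 := by
  rw [rad_sq, ← sq_abs (p.1 : ℝ), ← sq_abs (p.2 : ℝ)]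
  have h : 1 ≤ |(p.1 : ℝ)| + |(p.2 : ℝ)| := by
    by_contra hc
    apply hp
    have hc' : |p.1| + |p.2| < 1 := by
      push Not at hc
      exact_mod_cast hc
    have h1 : p.1 = 0 := by
      have := abs_nonneg p.2
      have : |p.1| < 1 := by omega
      exact Int.abs_lt_one_iff.1 this
    have h2 : p.2 = 0 := by
      have := abs_nonneg p.1
      have : |p.2| < 1 := by omega
      exact Int.abs_lt_one_iff.1 this
    simp [rad, h1, h2]
  have h1 := abs_nonneg (p.1 : ℝ)
  have h2 := abs_nonneg (p.2 : ℝ)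
  nlinarith [sq_nonneg (|(p.1 : ℝ)| - |(p.2 : ℝ)|)]

lemma twoD : ∃ K : ℝ, 0 < K ∧ ∀ σ : ℝ, 0 < σ → σ ≤ 1 →
    Summable (fun p : ℤ × ℤ => rad p ^ (-(1 / 2) : ℝ) * rexp (-σ * rad p)) ∧
    ∑' p : ℤ × ℤ, rad p ^ (-(1 / 2) : ℝ) * rexp (-σ * rad p) ≤ K * σ ^ (-(3 / 2) : ℝ) := by
  refine ⟨9 ^ (1 / 4 : ℝ) * 24 ^ 2, by positivity, fun σ hσ hσ1 => ?_⟩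
  obtain ⟨hs, hb⟩ := oneD hσ hσ1
  set f : ℤ → ℝ := fun n => (1 + |(n : ℝ)|) ^ (-(1 / 4) : ℝ) * rexp (-(σ / 2) * |(n : ℝ)|) with hf
  have hf0 : ∀ n, 0 ≤ f n := fun n => by positivity
  have hle : ∀ p : ℤ × ℤ, rad p ^ (-(1 / 2) : ℝ) * rexp (-σ * rad p) ≤ 9 ^ (1 / 4 : ℝ) * (f p.1 * f p.2) := by
    intro p
    by_cases hp : rad p = 0
    · rw [hp, Real.zero_rpow (by norm_num), zero_mul]
      have := hf0 p.1
      have := hf0 p.2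
      positivity
    · have hr : 0 < rad p := lt_of_le_of_ne (rad_nonneg p) (Ne.symm hp)
      have h1 : rad p ^ (-(1 / 2) : ℝ) ≤ 9 ^ (1 / 4 : ℝ) * ((1 + |(p.1 : ℝ)|) ^ (-(1 / 4) : ℝ) * (1 + |(p.2 : ℝ)|) ^ (-(1 / 4) : ℝ)) := by
        rw [← Real.mul_rpow (by positivity) (by positivity)]
        have e : rad p ^ (-(1 / 2) : ℝ) = 9 ^ (1 / 4 : ℝ) * (9 * rad p ^ 2) ^ (-(1 / 4) : ℝ) := by
          rw [Real.mul_rpow (by norm_num) (by positivity), ← mul_assoc, ← Real.rpow_add (by norm_num),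
            ← Real.rpow_natCast (rad p) 2, ← Real.rpow_mul hr.le]
          norm_num
        rw [e]
        gcongr 9 ^ (1 / 4 : ℝ) * ?_
        exact Real.rpow_le_rpow_of_nonpos (by positivity) (rad_pos_ge hp) (by norm_num)
      have h2 : rexp (-σ * rad p) ≤ rexp (-(σ / 2) * |(p.1 : ℝ)|) * rexp (-(σ / 2) * |(p.2 : ℝ)|) := by
        rw [← Real.exp_add]
        apply Real.exp_le_exp.2
        have := rad_ge p
        nlinarith
      calc _ ≤ (9 ^ (1 / 4 : ℝ) * ((1 + |(p.1 : ℝ)|) ^ (-(1 / 4) : ℝ) * (1 + |(p.2 : ℝ)|) ^ (-(1 / 4) : ℝ))) *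
            (rexp (-(σ / 2) * |(p.1 : ℝ)|) * rexp (-(σ / 2) * |(p.2 : ℝ)|)) := by gcongr
        _ = _ := by rw [hf]; ring
  have hs2 : Summable (fun p : ℤ × ℤ => 9 ^ (1 / 4 : ℝ) * (f p.1 * f p.2)) := (hs.mul_of_nonneg hs hf0 hf0).mul_left _
  have hs3 : Summable (fun p : ℤ × ℤ => rad p ^ (-(1 / 2) : ℝ) * rexp (-σ * rad p)) :=
    Summable.of_nonneg_of_le (fun p => by have := rad_nonneg p; positivity) hle hs2
  refine ⟨hs3, (hs3.tsum_le_tsum hle hs2).trans ?_⟩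
  rw [tsum_mul_left, ← tsum_mul_tsum_of_summable_norm (by simpa [abs_of_nonneg, hf0] using hs) (by simpa [abs_of_nonneg, hf0] using hs), mul_assoc]
  gcongr 9 ^ (1 / 4 : ℝ) * ?_
  have h0 : 0 ≤ ∑' n, f n := tsum_nonneg hf0
  calc (∑' n, f n) * (∑' n, f n) ≤ (24 * σ ^ (-(3 / 4) : ℝ)) * (24 * σ ^ (-(3 / 4) : ℝ)) := by gcongr
    _ = 24 ^ 2 * σ ^ (-(3 / 2) : ℝ) := by
      have : σ ^ (-(3 / 2) : ℝ) = σ ^ (-(3 / 4) : ℝ) * σ ^ (-(3 / 4) : ℝ) := by rw [← Real.rpow_add hσ]; norm_num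
      rw [this]; ring

lemma error_tendsto (ε : ℝ → ℝ) (K : ℝ) (h0 : ∀ r, 0 < r → 0 ≤ ε r) (hK : ∀ r, 0 < r → ε r ≤ K) (hε : Tendsto ε atTop (𝓝 0)) :
    Tendsto (fun σ : ℝ => σ ^ (3 / 2 : ℝ) * ∑' p : ℤ × ℤ, rad p ^ (-(1 / 2) : ℝ) * ε (rad p) * rexp (-σ * rad p)) (𝓝[>] 0) (𝓝 0) ∧
    ∀ σ : ℝ, 0 < σ → σ ≤ 1 → Summable (fun p : ℤ × ℤ => rad p ^ (-(1 / 2) : ℝ) * ε (rad p) * rexp (-σ * rad p)) := by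
  obtain ⟨K', hK'0, hK'⟩ := twoD
  have hK0 : 0 ≤ K := (h0 1 one_pos).trans (hK 1 one_pos)
  have hterm0 : ∀ (σ : ℝ) (p : ℤ × ℤ), 0 ≤ rad p ^ (-(1 / 2) : ℝ) * ε (rad p) * rexp (-σ * rad p) := by
    intro σ p
    by_cases hp : rad p = 0
    · rw [hp, Real.zero_rpow (by norm_num)]; simp
    · have hr : 0 < rad p := lt_of_le_of_ne (rad_nonneg p) (Ne.symm hp)
      have := h0 _ hr
      positivity
  have hsum : ∀ σ : ℝ, 0 < σ → σ ≤ 1 → Summable (fun p : ℤ × ℤ => rad p ^ (-(1 / 2) : ℝ) * ε (rad p) * rexp (-σ * rad p)) := by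
    intro σ hσ hσ1
    refine Summable.of_nonneg_of_le (hterm0 σ) (fun p => ?_) ((hK' σ hσ hσ1).1.mul_left K)
    by_cases hp : rad p = 0
    · rw [hp, Real.zero_rpow (by norm_num)]; simp
    · have hr : 0 < rad p := lt_of_le_of_ne (rad_nonneg p) (Ne.symm hp)
      have h1 := hK _ hr
      calc _ ≤ rad p ^ (-(1 / 2) : ℝ) * K * rexp (-σ * rad p) := by gcongr
        _ = _ := by ring
  refine ⟨?_, hsum⟩
  have hI : ∀ᶠ σ : ℝ in 𝓝[>] 0, 0 < σ ∧ σ < 1 := Ioo_mem_nhdsGT one_pos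
  rw [Metric.tendsto_nhds]
  intro η hη
  set η' := η / (4 * K') with hη'
  have hη'0 : 0 < η' := by positivity
  obtain ⟨R, hR⟩ := (eventually_atTop.1 (hε.eventually (gt_mem_nhds hη'0)))
  have hεle : ∀ r, 0 < r → ε r ≤ η' + K * rexp R * rexp (-1 * r) := by
    intro r hr
    by_cases h : R ≤ r
    · have := hR r h
      have h2 : 0 ≤ K * rexp R * rexp (-1 * r) := by positivity
      linarith
    · push Not at h
      have h1 := hK r hr
      have h2 : 1 ≤ rexp R * rexp (-1 * r) := by
        rw [← Real.exp_add]; apply Real.one_le_exp; linarith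
      nlinarith
  have hz : Tendsto (fun σ : ℝ => σ ^ (3 / 2 : ℝ) * (K * rexp R * (K' * 1))) (𝓝[>] 0) (𝓝 0) := by
    have := (rpow_tendsto_zero (a := 3 / 2) (by norm_num)).mul_const (K * rexp R * (K' * 1))
    simpa using this
  filter_upwards [hI, hz.eventually (gt_mem_nhds (show (0 : ℝ) < η / 2 by positivity))] with σ hσ hσ2
  obtain ⟨hσ, hσ1⟩ := hσ
  have s1 := hK' σ hσ hσ1.le
  have s2 := hK' 1 one_pos le_rfl
  rw [Real.one_rpow] at s2
  have hle : ∀ p : ℤ × ℤ, rad p ^ (-(1 / 2) : ℝ) * ε (rad p) * rexp (-σ * rad p) ≤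
      η' * (rad p ^ (-(1 / 2) : ℝ) * rexp (-σ * rad p)) + K * rexp R * (rad p ^ (-(1 / 2) : ℝ) * rexp (-1 * rad p)) := by
    intro p
    by_cases hp : rad p = 0
    · rw [hp, Real.zero_rpow (by norm_num)]; simp
    · have hr : 0 < rad p := lt_of_le_of_ne (rad_nonneg p) (Ne.symm hp)
      have h1 := hεle _ hr
      have h2 : rexp (-σ * rad p) ≤ 1 := by
        rw [Real.exp_le_one_iff]; nlinarith
      calc _ ≤ rad p ^ (-(1 / 2) : ℝ) * (η' + K * rexp R * rexp (-1 * rad p)) * rexp (-σ * rad p) := by gcongr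
        _ = η' * (rad p ^ (-(1 / 2) : ℝ) * rexp (-σ * rad p)) + K * rexp R * (rad p ^ (-(1 / 2) : ℝ) * rexp (-1 * rad p)) * rexp (-σ * rad p) := by ring
        _ ≤ _ := by
          exact add_le_add le_rfl (mul_le_of_le_one_right (by positivity) h2)
  have h3 := (hsum σ hσ hσ1.le).tsum_le_tsum hle ((s1.1.mul_left _).add (s2.1.mul_left _))
  rw [(s1.1.mul_left _).tsum_add (s2.1.mul_left _), tsum_mul_left, tsum_mul_left] at h3
  have h4 : ∑' p : ℤ × ℤ, rad p ^ (-(1 / 2) : ℝ) * ε (rad p) * rexp (-σ * rad p) ≤ η' * (K' * σ ^ (-(3 / 2) : ℝ)) + K * rexp R * (K' * 1) :=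
    h3.trans (by have := s1.2; have := s2.2; gcongr)
  have h5 : 0 ≤ ∑' p : ℤ × ℤ, rad p ^ (-(1 / 2) : ℝ) * ε (rad p) * rexp (-σ * rad p) := tsum_nonneg (hterm0 σ)
  rw [Real.dist_eq, sub_zero, abs_of_nonneg (by positivity)]
  calc _ ≤ σ ^ (3 / 2 : ℝ) * (η' * (K' * σ ^ (-(3 / 2) : ℝ)) + K * rexp R * (K' * 1)) := by gcongr
    _ = η' * K' * (σ ^ (3 / 2 : ℝ) * σ ^ (-(3 / 2) : ℝ)) + σ ^ (3 / 2 : ℝ) * (K * rexp R * (K' * 1)) := by ring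
    _ = η / 4 + σ ^ (3 / 2 : ℝ) * (K * rexp R * (K' * 1)) := by
      rw [← Real.rpow_add hσ, hη']; norm_num; field_simp
    _ < η := by linarith

lemma trans_cont {g : ℝ → ℝ} (hg : Integrable g) :
    Tendsto (fun δ : ℝ => ∫ y, ‖g y - g (y + δ)‖) (𝓝 0) (𝓝 0) := by
  have hmp : ∀ δ : ℝ, MeasurePreserving (fun y : ℝ => y + δ) volume volume := fun δ => measurePreserving_add_right volume δ
  let F : ℝ → C(ℝ, ℝ) := fun δ => ⟨fun y => y + δ, by fun_prop⟩
  have hF : Continuous F := by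
    apply ContinuousMap.continuous_of_continuous_uncurry
    show Continuous (fun p : ℝ × ℝ => p.2 + p.1)
    fun_prop
  have h1 : Continuous (fun δ : ℝ => Lp.compMeasurePreserving (F δ) (hmp δ) (hg.toL1 g)) :=
    continuous_const.compMeasurePreservingLp hF hmp (by simp)
  have h2 : Tendsto (fun δ : ℝ => ‖hg.toL1 g - Lp.compMeasurePreserving (F δ) (hmp δ) (hg.toL1 g)‖) (𝓝 0)
     (𝓝 ‖hg.toL1 g - Lp.compMeasurePreserving (F 0) (hmp 0) (hg.toL1 g)‖) :=
    ((continuous_const.sub h1).norm).tendsto 0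
  have key : ∀ δ : ℝ, ‖hg.toL1 g - Lp.compMeasurePreserving (F δ) (hmp δ) (hg.toL1 g)‖ = ∫ y, ‖g y - g (y + δ)‖ := by
    intro δ
    rw [L1.norm_eq_integral_norm]
    apply integral_congr_ae
    have a1 := Integrable.coeFn_toL1 hg
    have a2 := Lp.coeFn_compMeasurePreserving (hg.toL1 g) (hmp δ)
    have a3 := Lp.coeFn_sub (hg.toL1 g) (Lp.compMeasurePreserving (F δ) (hmp δ) (hg.toL1 g))
    have a4 := (hmp δ).quasiMeasurePreserving.ae_eq_comp a1
    filter_upwards [a1, a2, a3, a4] with y b1 b2 b3 b4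
    rw [b3, Pi.sub_apply, b1]
    congr 2
    exact b2.trans b4
  simp only [key] at h2
  simpa using h2

lemma trans_bound {g : ℝ → ℝ} (hg : Integrable g) (δ : ℝ) :
    ∫ y, ‖g y - g (y + δ)‖ ≤ 2 * ∫ y, ‖g y‖ := by
  have hg2 : Integrable (fun y => g (y + δ)) := hg.comp_add_right δ
  calc ∫ y, ‖g y - g (y + δ)‖ ≤ ∫ y, (‖g y‖ + ‖g (y + δ)‖) :=
        integral_mono (hg.sub hg2).norm (hg.norm.add hg2.norm) (fun y => norm_sub_le _ _)
    _ = _ := by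
      rw [integral_add hg.norm hg2.norm, integral_add_right_eq_self (fun y => ‖g y‖)]; ring

lemma rl_bound {g : ℝ → ℝ} (hg : Integrable g) (h0 : ∀ y ≤ 0, g y = 0) {z : ℂ} (hz : 0 ≤ z.re) (hω : 0 < z.im) :
    ‖∫ y, (g y : ℂ) * Complex.exp (-z * y)‖ ≤ ∫ y, ‖g y - g (y + π / z.im)‖ := by
  set δ := π / z.im with hδ
  have hδ0 : 0 < δ := by positivity
  have hInt : Integrable (fun y : ℝ => (g y : ℂ) * Complex.exp (-z * y)) := by
    have hgc : Integrable (fun y => (g y : ℂ)) := hg.ofReal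
    refine hgc.mono ?_ ?_
    · exact hgc.aestronglyMeasurable.mul (by fun_prop)
    · refine Eventually.of_forall fun y => ?_
      by_cases hy : y ≤ 0
      · simp [h0 y hy]
      · rw [norm_mul]
        refine mul_le_of_le_one_right (norm_nonneg _) ?_
        rw [Complex.norm_exp, Real.exp_le_one_iff]
        simp; exact mul_nonneg hz (not_le.1 hy).le
  set I := ∫ y, (g y : ℂ) * Complex.exp (-z * y) with hI
  have hexp : Complex.exp (-z * δ) = -(rexp (-z.re * δ) : ℂ) := by
    have : -z * δ = ((-z.re * δ : ℝ) : ℂ) - π * Complex.I := by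
      apply Complex.ext
      · simp
      · simp [hδ]; field_simp
    rw [this, Complex.exp_sub, Complex.exp_pi_mul_I]; simp [div_neg]
  have hInt2 : Integrable (fun y : ℝ => (g (y + δ) : ℂ) * Complex.exp (-z * y)) := by
    have := (hInt.comp_add_right δ).mul_const (Complex.exp (z * δ))
    refine this.congr (Eventually.of_forall fun y => ?_)
    simp only
    rw [mul_assoc, ← Complex.exp_add]; push_cast; ring_nf
  have h1 : I = -(rexp (-z.re * δ) : ℂ) * ∫ y, (g (y + δ) : ℂ) * Complex.exp (-z * y) := by
    rw [← hexp, ← integral_const_mul, hI, ← integral_add_right_eq_self _ δ]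
    congr 1; ext y
    rw [mul_left_comm, ← Complex.exp_add]; push_cast; ring_nf
  have h2 : (1 + rexp (-z.re * δ)) * I = rexp (-z.re * δ) * ∫ y, ((g y : ℂ) * Complex.exp (-z * y) - (g (y + δ) : ℂ) * Complex.exp (-z * y)) := by
    rw [integral_sub hInt hInt2, ← hI]
    linear_combination h1
  have h3 : ‖∫ y, ((g y : ℂ) * Complex.exp (-z * y) - (g (y + δ) : ℂ) * Complex.exp (-z * y))‖ ≤
      ∫ y, ‖g y - g (y + δ)‖ * rexp (z.re * δ) := by
    apply norm_integral_le_of_norm_le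
    · exact ((hg.sub (hg.comp_add_right δ)).norm).mul_const _
    · refine Eventually.of_forall fun y => ?_
      rw [← sub_mul, norm_mul, ← Complex.ofReal_sub, Complex.norm_real, Complex.norm_exp]
      by_cases hy : y + δ ≤ 0
      · rw [h0 y (by linarith), h0 _ hy]; simp
      · gcongr
        simp
        have : 0 ≤ z.re * (y + δ) := mul_nonneg hz (not_le.1 hy).le
        linarith
  rw [integral_mul_const] at h3
  have h4 := congrArg norm h2
  rw [norm_mul, norm_mul, ← Complex.ofReal_one, ← Complex.ofReal_add, Complex.norm_real, Complex.norm_real,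
    Real.norm_of_nonneg (by positivity), Real.norm_of_nonneg (by positivity)] at h4
  have h5 : rexp (-z.re * δ) * rexp (z.re * δ) = 1 := by rw [← Real.exp_add]; simp
  calc ‖I‖ ≤ (1 + rexp (-z.re * δ)) * ‖I‖ := by
        refine le_mul_of_one_le_left (norm_nonneg _) ?_
        linarith [Real.exp_pos (-z.re * δ)]
    _ = _ := h4
    _ ≤ rexp (-z.re * δ) * ((∫ y, ‖g y - g (y + δ)‖) * rexp (z.re * δ)) := by gcongr
    _ = _ := by rw [mul_left_comm, h5, mul_one]

noncomputable def Dq (y : ℝ) : ℝ := 1 + (1 + y)⁻¹ + (1 + y)⁻¹ ^ 2 + (1 + y)⁻¹ ^ 3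
noncomputable def Dq1 (y : ℝ) : ℝ := -((1 + y)⁻¹ ^ 2 + 2 * (1 + y)⁻¹ ^ 3 + 3 * (1 + y)⁻¹ ^ 4)
noncomputable def Dq2 (y : ℝ) : ℝ := 2 * (1 + y)⁻¹ ^ 3 + 6 * (1 + y)⁻¹ ^ 4 + 12 * (1 + y)⁻¹ ^ 5

lemma inv_deriv {y : ℝ} (hy : 0 < y) : HasDerivAt (fun y : ℝ => (1 + y)⁻¹) (-(1 + y)⁻¹ ^ 2) y := by
  have h := ((hasDerivAt_id y).const_add 1).inv (by simp; linarith)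
  convert! h using 1
  simp; field_simp

lemma Dq_deriv {y : ℝ} (hy : 0 < y) : HasDerivAt Dq (Dq1 y) y := by
  have h := inv_deriv hy
  have := ((h.const_add 1).add (h.pow 2)).add (h.pow 3)
  convert! this using 1
  unfold Dq1; generalize (1 + y)⁻¹ = w; push_cast; ring

lemma Dq1_deriv {y : ℝ} (hy : 0 < y) : HasDerivAt Dq1 (Dq2 y) y := by
  have h := inv_deriv hy
  have := (((h.pow 2).add ((h.pow 3).const_mul 2)).add ((h.pow 4).const_mul 3)).neg
  convert! this using 1
  unfold Dq2; generalize (1 + y)⁻¹ = w; push_cast; ring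

noncomputable def sD (y : ℝ) : ℝ := √(Dq y)

lemma w_facts {y : ℝ} (hy : 0 < y) : 0 < (1 + y)⁻¹ ∧ (1 + y)⁻¹ ≤ 1 := by
  refine ⟨by positivity, inv_le_one_of_one_le₀ (by linarith)⟩

lemma Dq_ge {y : ℝ} (hy : 0 < y) : 1 ≤ Dq y := by
  have := (w_facts hy).1
  unfold Dq
  have : 0 ≤ (1 + y)⁻¹ + (1 + y)⁻¹ ^ 2 + (1 + y)⁻¹ ^ 3 := by positivity
  linarith

lemma sD_ge {y : ℝ} (hy : 0 < y) : 1 ≤ sD y := Real.one_le_sqrt.2 (Dq_ge hy)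

lemma sD_sq {y : ℝ} (hy : 0 < y) : sD y ^ 2 = Dq y := Real.sq_sqrt (by linarith [Dq_ge hy])

lemma sD_deriv {y : ℝ} (hy : 0 < y) : HasDerivAt sD (Dq1 y / (2 * sD y)) y :=
  (Dq_deriv hy).sqrt (by linarith [Dq_ge hy])

noncomputable def chi (y : ℝ) : ℝ := 4 * √y * (sD y / 2 - 1)
noncomputable def chi1 (y : ℝ) : ℝ := 2 * (sD y / 2 - 1) / √y + √y * (Dq1 y / sD y)
noncomputable def chi2 (y : ℝ) : ℝ :=
  Dq1 y / (√y * sD y) - (sD y / 2 - 1) / (y * √y) + √y * (Dq2 y / sD y - Dq1 y ^ 2 / (2 * sD y ^ 3))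

lemma chi_deriv {y : ℝ} (hy : 0 < y) : HasDerivAt chi (chi1 y) y := by
  have h1 := (Real.hasDerivAt_sqrt hy.ne').const_mul 4
  have h2 := ((sD_deriv hy).div_const 2).sub_const 1
  have h := h1.mul h2
  have := sD_ge hy
  have : √y ≠ 0 := by positivity
  convert! h using 1
  unfold chi1; field_simp; ring

lemma chi1_deriv {y : ℝ} (hy : 0 < y) : HasDerivAt chi1 (chi2 y) y := by
  have h1 := Real.hasDerivAt_sqrt hy.ne'
  have h2 := (((sD_deriv hy).div_const 2).sub_const 1).const_mul 2
  have hs := sD_ge hy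
  have hy' : √y ≠ 0 := by positivity
  have h := (h2.div h1 hy').add (h1.mul ((Dq1_deriv hy).div (sD_deriv hy) (by linarith)))
  convert! h using 1
  have e : y = √y ^ 2 := (Real.sq_sqrt hy.le).symm
  have hs0 : sD y ≠ 0 := by linarith
  unfold chi2
  rw [Pi.div_apply]
  generalize √y = q at *
  generalize sD y = s at *
  generalize Dq1 y = d1 at *
  generalize Dq2 y = d2 at *
  subst e
  field_simp
  ring

lemma phi_bound {y : ℝ} (hy : 0 < y) : |sD y / 2 - 1| ≤ y * (1 + y)⁻¹ := by
  obtain ⟨h0, h1⟩ := w_facts hy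
  have hs := sD_ge hy
  have hsq := sD_sq hy
  have e : y * (1 + y)⁻¹ = 1 - (1 + y)⁻¹ := by field_simp; ring
  rw [e]
  unfold Dq at hsq
  generalize (1 + y)⁻¹ = w at *
  have hw2 : w ^ 2 ≤ w := by nlinarith
  have hw3 : w ^ 3 ≤ w := by nlinarith [mul_nonneg h0.le h0.le]
  have h3 : (sD y - 2) * (sD y + 2) = -(1 - w) * (3 + 2 * w + w ^ 2) := by nlinarith
  rw [abs_le]
  constructor
  · nlinarith
  · nlinarith

lemma Dq1_bound {y : ℝ} (hy : 0 < y) : |Dq1 y| ≤ 6 * (1 + y)⁻¹ ^ 2 := by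
  obtain ⟨h0, h1⟩ := w_facts hy
  unfold Dq1
  generalize (1 + y)⁻¹ = w at *
  rw [abs_neg, abs_of_nonneg (by positivity)]
  have a : w ^ 3 ≤ w ^ 2 := pow_le_pow_of_le_one h0.le h1 (by norm_num)
  have b : w ^ 4 ≤ w ^ 2 := pow_le_pow_of_le_one h0.le h1 (by norm_num)
  linarith

lemma Dq2_bound {y : ℝ} (hy : 0 < y) : |Dq2 y| ≤ 20 * (1 + y)⁻¹ ^ 2 := by
  obtain ⟨h0, h1⟩ := w_facts hy
  unfold Dq2
  generalize (1 + y)⁻¹ = w at *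
  rw [abs_of_nonneg (by positivity)]
  have a : w ^ 3 ≤ w ^ 2 := pow_le_pow_of_le_one h0.le h1 (by norm_num)
  have b : w ^ 4 ≤ w ^ 2 := pow_le_pow_of_le_one h0.le h1 (by norm_num)
  have c : w ^ 5 ≤ w ^ 2 := pow_le_pow_of_le_one h0.le h1 (by norm_num)
  linarith

lemma chi_bound {y : ℝ} (hy : 0 < y) : |chi y| ≤ 4 * √y := by
  have h := phi_bound hy
  have h2 : y * (1 + y)⁻¹ ≤ 1 := by rw [← div_eq_mul_inv, div_le_one (by linarith)]; linarith
  unfold chi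
  rw [abs_mul, abs_of_nonneg (by positivity)]
  exact mul_le_of_le_one_right (by positivity) (h.trans h2)

lemma chi1_bound {y : ℝ} (hy : 0 < y) : |chi1 y| ≤ 8 * √y := by
  have h := phi_bound hy
  obtain ⟨h0, h1⟩ := w_facts hy
  have hs := sD_ge hy
  have hq : 0 < √y := by positivity
  have h2 : |sD y / 2 - 1| ≤ y := h.trans (mul_le_of_le_one_right hy.le h1)
  have hd := Dq1_bound hy
  have h3 : |Dq1 y| ≤ 6 := hd.trans (by nlinarith)
  unfold chi1
  refine (abs_add_le _ _).trans ?_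
  rw [abs_div, abs_mul, abs_mul, abs_div, abs_of_pos hq, abs_of_pos (by linarith : 0 < sD y), abs_two]
  have a : 2 * |sD y / 2 - 1| / √y ≤ 2 * √y := by
    rw [div_le_iff₀ hq, mul_assoc, Real.mul_self_sqrt hy.le]; linarith
  have b : |Dq1 y| / sD y ≤ 6 := (div_le_self (abs_nonneg _) hs).trans h3
  nlinarith

lemma chi2_bound {y : ℝ} (hy : 0 < y) : |chi2 y| ≤ 100 * (y ^ (-(1 / 2) : ℝ) * (1 + y)⁻¹) := by
  have h := phi_bound hy
  obtain ⟨h0, h1⟩ := w_facts hy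
  have hs := sD_ge hy
  have hq : 0 < √y := by positivity
  have hd := Dq1_bound hy
  have hd2 := Dq2_bound hy
  have e : y ^ (-(1 / 2) : ℝ) = (√y)⁻¹ := by rw [Real.rpow_neg hy.le, Real.sqrt_eq_rpow]
  have hw : (1 + y)⁻¹ ^ 2 ≤ (1 + y)⁻¹ := by nlinarith
  have hyw : √y * (1 + y)⁻¹ ^ 2 ≤ (√y)⁻¹ * (1 + y)⁻¹ := by
    have : √y = (√y)⁻¹ * y := by
      rw [inv_mul_eq_div, eq_div_iff hq.ne']; exact Real.mul_self_sqrt hy.le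
    have h2 : y * (1 + y)⁻¹ ≤ 1 := by rw [← div_eq_mul_inv, div_le_one (by linarith)]; linarith
    calc √y * (1 + y)⁻¹ ^ 2 = (√y)⁻¹ * y * (1 + y)⁻¹ ^ 2 := by rw [← this]
      _ = (√y)⁻¹ * (1 + y)⁻¹ * (y * (1 + y)⁻¹) := by ring
      _ ≤ _ := mul_le_of_le_one_right (by positivity) h2
  rw [e]
  have a1 : |Dq1 y / (√y * sD y)| ≤ 6 * ((√y)⁻¹ * (1 + y)⁻¹) := by
    rw [abs_div, abs_of_pos (by positivity : 0 < √y * sD y), div_le_iff₀ (by positivity)]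
    calc |Dq1 y| ≤ 6 * (1 + y)⁻¹ := by linarith
      _ ≤ 6 * (1 + y)⁻¹ * sD y := le_mul_of_one_le_right (by positivity) hs
      _ = _ := by field_simp
  have a2 : |(sD y / 2 - 1) / (y * √y)| ≤ (√y)⁻¹ * (1 + y)⁻¹ := by
    rw [abs_div, abs_of_pos (by positivity : 0 < y * √y), div_le_iff₀ (by positivity)]
    refine h.trans (le_of_eq ?_)
    field_simp
  have a3 : |Dq2 y / sD y| ≤ 20 * (1 + y)⁻¹ ^ 2 := by
    rw [abs_div, abs_of_pos (by linarith : 0 < sD y)]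
    exact (div_le_self (abs_nonneg _) hs).trans hd2
  have a4 : |Dq1 y ^ 2 / (2 * sD y ^ 3)| ≤ 36 * (1 + y)⁻¹ ^ 2 := by
    have : 1 ≤ sD y ^ 3 := one_le_pow₀ hs
    rw [abs_div, abs_of_pos (by positivity : 0 < 2 * sD y ^ 3), abs_pow]
    refine (div_le_self (by positivity) (by linarith)).trans ?_
    have : |Dq1 y| ^ 2 ≤ (6 * (1 + y)⁻¹ ^ 2) ^ 2 := by gcongr
    nlinarith [sq_nonneg (1 + y)⁻¹]
  have a5 : |√y * (Dq2 y / sD y - Dq1 y ^ 2 / (2 * sD y ^ 3))| ≤ 56 * ((√y)⁻¹ * (1 + y)⁻¹) := by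
    rw [abs_mul, abs_of_pos hq]
    calc _ ≤ √y * (20 * (1 + y)⁻¹ ^ 2 + 36 * (1 + y)⁻¹ ^ 2) := by
          gcongr; exact (abs_sub _ _).trans (add_le_add a3 a4)
      _ = 56 * (√y * (1 + y)⁻¹ ^ 2) := by ring
      _ ≤ _ := by gcongr
  unfold chi2
  have := abs_add_le (Dq1 y / (√y * sD y) - (sD y / 2 - 1) / (y * √y)) (√y * (Dq2 y / sD y - Dq1 y ^ 2 / (2 * sD y ^ 3)))
  have := abs_sub (Dq1 y / (√y * sD y)) ((sD y / 2 - 1) / (y * √y))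
  have : 0 ≤ (√y)⁻¹ * (1 + y)⁻¹ := by positivity
  linarith

lemma Dq_meas : Measurable Dq := by unfold Dq; fun_prop
lemma Dq1_meas : Measurable Dq1 := by unfold Dq1; fun_prop
lemma Dq2_meas : Measurable Dq2 := by unfold Dq2; fun_prop
lemma sD_meas : Measurable sD := Dq_meas.sqrt
lemma chi2_meas : Measurable chi2 := by
  have := sD_meas
  have := Dq1_meas
  have := Dq2_meas
  unfold chi2; fun_prop

lemma wt_int : IntegrableOn (fun y : ℝ => y ^ (-(1 / 2) : ℝ) * (1 + y)⁻¹) (Ioi 0) := by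
  rw [← Ioc_union_Ioi_eq_Ioi (zero_le_one (α := ℝ))]
  have hm : Measurable (fun y : ℝ => y ^ (-(1 / 2) : ℝ) * (1 + y)⁻¹) := by fun_prop
  apply IntegrableOn.union
  · have h : IntegrableOn (fun y : ℝ => y ^ (-(1 / 2) : ℝ)) (Ioc 0 1) := by
      rw [← intervalIntegrable_iff_integrableOn_Ioc_of_le zero_le_one]
      exact intervalIntegral.intervalIntegrable_rpow' (by norm_num)
    refine Integrable.mono' h hm.aestronglyMeasurable ?_
    refine (ae_restrict_iff' measurableSet_Ioc).2 (Eventually.of_forall fun y hy => ?_)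
    have := w_facts hy.1
    have hy0 := hy.1
    rw [Real.norm_of_nonneg (by positivity)]
    exact mul_le_of_le_one_right (by positivity) this.2
  · have h : IntegrableOn (fun y : ℝ => y ^ (-(3 / 2) : ℝ)) (Ioi 1) :=
      integrableOn_Ioi_rpow_of_lt (by norm_num) one_pos
    refine Integrable.mono' h hm.aestronglyMeasurable ?_
    refine (ae_restrict_iff' measurableSet_Ioi).2 (Eventually.of_forall fun y hy => ?_)
    have hy0 : 0 < y := lt_trans one_pos hy
    rw [Real.norm_of_nonneg (by positivity)]
    have e : y ^ (-(3 / 2) : ℝ) = y ^ (-(1 / 2) : ℝ) * y⁻¹ := by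
      rw [← Real.rpow_neg_one, ← Real.rpow_add hy0]; norm_num
    rw [e]
    gcongr
    linarith

lemma chi2_int : IntegrableOn chi2 (Ioi 0) := by
  refine Integrable.mono' (wt_int.const_mul 100) chi2_meas.aestronglyMeasurable ?_
  exact (ae_restrict_iff' measurableSet_Ioi).2 (Eventually.of_forall fun y hy => chi2_bound hy)

lemma int_of_bound {u : ℝ → ℝ} {A : ℝ} (hu : ContinuousOn u (Ioi 0)) (hb : ∀ y > 0, |u y| ≤ A * √y)
    {z : ℂ} (hz : 0 < z.re) : IntegrableOn (fun y : ℝ => (u y : ℂ) * Complex.exp (-z * y)) (Ioi 0) := by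
  have h := (integrable_weight (a := 3 / 2) (by norm_num) hz).const_mul A
  refine Integrable.mono' h ?_ ?_
  · have : ContinuousOn (fun y : ℝ => (u y : ℂ) * Complex.exp (-z * y)) (Ioi 0) :=
      (Complex.continuous_ofReal.comp_continuousOn hu).mul (by fun_prop)
    exact this.aestronglyMeasurable measurableSet_Ioi
  · refine (ae_restrict_iff' measurableSet_Ioi).2 (Eventually.of_forall fun y hy => ?_)
    have := hb y hy
    rw [norm_mul, Complex.norm_real, Complex.norm_exp, ← mul_assoc, Real.norm_eq_abs]
    rw [Real.sqrt_eq_rpow] at this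
    have e : (-z * y).re = -z.re * y := by simp
    rw [e, show (3 / 2 : ℝ) - 1 = 1 / 2 by norm_num]
    gcongr

lemma parts {u u' : ℝ → ℝ} {A : ℝ} (hu : ∀ y > 0, HasDerivAt u (u' y) y) (hb : ∀ y > 0, |u y| ≤ A * √y)
    {z : ℂ} (hz : 0 < z.re) (hi : IntegrableOn (fun y : ℝ => (u' y : ℂ) * Complex.exp (-z * y)) (Ioi 0)) :
    ∫ y in Ioi (0 : ℝ), (u y : ℂ) * Complex.exp (-z * y) = z⁻¹ * ∫ y in Ioi (0 : ℝ), (u' y : ℂ) * Complex.exp (-z * y) := by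
  have hz0 : z ≠ 0 := fun h => by simp [h] at hz
  have hc : ContinuousOn u (Ioi 0) := fun y hy => (hu y hy).continuousAt.continuousWithinAt
  have hbd : ∀ y > 0, ‖(u y : ℂ) * (-z⁻¹ * Complex.exp (-z * y))‖ ≤ A * ‖z⁻¹‖ * (y ^ (1 / 2 : ℝ) * rexp (-z.re * y)) := by
    intro y hy
    have := hb y hy
    rw [norm_mul, norm_mul, norm_neg, Complex.norm_real, Complex.norm_exp, Real.norm_eq_abs]
    rw [Real.sqrt_eq_rpow] at this
    have e : (-z * y).re = -z.re * y := by simp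
    rw [e]
    calc _ ≤ A * y ^ (1 / 2 : ℝ) * (‖z⁻¹‖ * rexp (-z.re * y)) := by gcongr
      _ = _ := by ring
  have h := integral_Ioi_mul_deriv_eq_deriv_mul (a := 0) (a' := (0 : ℂ)) (b' := 0) (u := fun y : ℝ => (u y : ℂ)) (u' := fun y => (u' y : ℂ))
    (v := fun y : ℝ => -z⁻¹ * Complex.exp (-z * y)) (v' := fun y : ℝ => Complex.exp (-z * y))
    (fun y hy => (hu y hy).ofReal_comp) (fun y hy => ?_) (int_of_bound hc hb hz) ?_ ?_ ?_
  · rw [h, sub_zero, zero_sub, ← integral_const_mul, ← integral_neg]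
    congr 1; ext y; ring
  · have h1 : HasDerivAt (fun y : ℝ => -z * (y : ℂ)) (-z) y := by
      simpa using (Complex.ofRealCLM.hasDerivAt (x := y)).const_mul (-z)
    have := (h1.cexp).const_mul (-z⁻¹)
    convert! this using 1
    field_simp
  · refine (hi.const_mul (-z⁻¹)).congr (Eventually.of_forall fun y => ?_)
    simp; ring
  · have hl : Tendsto (fun y : ℝ => A * ‖z⁻¹‖ * (y ^ (1 / 2 : ℝ) * rexp (-z.re * y))) (𝓝[>] 0) (𝓝 0) := by
      have : ContinuousAt (fun y : ℝ => A * ‖z⁻¹‖ * (y ^ (1 / 2 : ℝ) * rexp (-z.re * y))) 0 := by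
        refine continuousAt_const.mul (ContinuousAt.mul ?_ (by fun_prop))
        exact Real.continuousAt_rpow_const _ _ (Or.inr (by norm_num))
      have h2 := this.tendsto
      rw [Real.zero_rpow (by norm_num)] at h2
      simp only [zero_mul, mul_zero] at h2
      exact h2.mono_left nhdsWithin_le_nhds
    refine squeeze_zero_norm' ?_ hl
    filter_upwards [self_mem_nhdsWithin] with y hy using hbd y hy
  · have hl : Tendsto (fun y : ℝ => A * ‖z⁻¹‖ * (y ^ (1 / 2 : ℝ) * rexp (-z.re * y))) atTop (𝓝 0) := by
      simpa using (tendsto_rpow_mul_exp_neg_mul_atTop_nhds_zero (1 / 2) z.re hz).const_mul (A * ‖z⁻¹‖)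
    refine squeeze_zero_norm' ?_ hl
    filter_upwards [eventually_gt_atTop 0] with y hy using hbd y hy

lemma chi_int {z : ℂ} (hz : 0 < z.re) :
    ∫ y in Ioi (0 : ℝ), (chi y : ℂ) * Complex.exp (-z * y) = z⁻¹ * (z⁻¹ * ∫ y in Ioi (0 : ℝ), (chi2 y : ℂ) * Complex.exp (-z * y)) := by
  have hc1 : ContinuousOn chi1 (Ioi 0) := fun y hy => (chi1_deriv hy).continuousAt.continuousWithinAt
  rw [parts (fun y hy => chi_deriv hy) (fun y hy => chi_bound hy) hz (int_of_bound hc1 (fun y hy => chi1_bound hy) hz),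
    parts (fun y hy => chi1_deriv hy) (fun y hy => chi1_bound hy) hz]
  refine Integrable.mono chi2_int ?_ ?_
  · exact (Complex.measurable_ofReal.comp chi2_meas).aestronglyMeasurable.mul (by fun_prop)
  · refine (ae_restrict_iff' measurableSet_Ioi).2 (Eventually.of_forall fun y hy => ?_)
    rw [norm_mul, Complex.norm_real]
    refine mul_le_of_le_one_right (norm_nonneg _) ?_
    rw [Complex.norm_exp, Real.exp_le_one_iff]
    simp; exact mul_nonneg hz.le (le_of_lt hy)

noncomputable def gch : ℝ → ℝ := indicator (Ioi 0) chi2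

lemma gch_int : Integrable gch := (integrable_indicator_iff measurableSet_Ioi).2 chi2_int

lemma chi_int_bound {z : ℂ} (hz : 0 < z.re) (hω : 0 < z.im) :
    ‖∫ y in Ioi (0 : ℝ), (chi y : ℂ) * Complex.exp (-z * y)‖ ≤ (z.im ^ 2)⁻¹ * ∫ y, ‖gch y - gch (y + π / z.im)‖ := by
  rw [chi_int hz, ← mul_assoc, norm_mul, ← integral_indicator measurableSet_Ioi]
  have e : (indicator (Ioi (0 : ℝ)) fun y => (chi2 y : ℂ) * Complex.exp (-z * y)) = fun y => (gch y : ℂ) * Complex.exp (-z * y) := by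
    ext y
    by_cases hy : y ∈ Ioi (0 : ℝ)
    · simp only [gch, indicator_of_mem hy]
    · simp [gch, indicator_of_notMem hy]
  rw [e]
  have h := rl_bound gch_int (fun y hy => indicator_of_notMem (by simpa using hy) _) hz.le hω
  have h2 : ‖z⁻¹ * z⁻¹‖ ≤ (z.im ^ 2)⁻¹ := by
    rw [← mul_inv, norm_inv, norm_mul, ← sq]
    have := Complex.abs_im_le_norm z
    rw [abs_of_pos hω] at this
    gcongr
  gcongr

noncomputable def Jin (r : ℝ) (t : ℝ) : ℝ := if r < t then 2 * √(t ^ 4 - r ^ 4) * t ^ (-(3 / 2) : ℝ) else 0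

noncomputable def Js (s : ℂ) (r : ℝ) : ℂ := ∫ t in Ioi (0 : ℝ), (Jin r t : ℂ) * Complex.exp (-s * t)

lemma Jin_scale {r y : ℝ} (hr : 0 < r) (hy : 0 < y) :
    Jin r (r * (1 + y)) = r ^ (1 / 2 : ℝ) * (4 * √y + chi y) := by
  have h1 : r < r * (1 + y) := by nlinarith
  unfold Jin
  rw [if_pos h1]
  have hx : 0 < 1 + y := by linarith
  have e1 : (r * (1 + y)) ^ 4 - r ^ 4 = (r ^ 2) ^ 2 * ((1 + y) ^ 3 * (y * Dq y)) := by
    unfold Dq; field_simp; ring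
  have e2 : √((1 + y) ^ 3) = (1 + y) ^ (3 / 2 : ℝ) := by
    rw [Real.sqrt_eq_rpow, ← Real.rpow_natCast, ← Real.rpow_mul hx.le]; norm_num
  rw [e1, Real.sqrt_mul (by positivity), Real.sqrt_sq (by positivity), Real.sqrt_mul (by positivity), e2,
    Real.sqrt_mul hy.le, Real.mul_rpow hr.le hx.le]
  have e3 : (1 + y) ^ (3 / 2 : ℝ) * (1 + y) ^ (-(3 / 2) : ℝ) = 1 := by
    rw [← Real.rpow_add hx]; norm_num
  have e4 : r ^ 2 * r ^ (-(3 / 2) : ℝ) = r ^ (1 / 2 : ℝ) := by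
    rw [← Real.rpow_natCast, ← Real.rpow_add hr]; norm_num
  unfold chi
  change 2 * (r ^ 2 * ((1 + y) ^ (3 / 2 : ℝ) * (√y * sD y))) * (r ^ (-(3 / 2) : ℝ) * (1 + y) ^ (-(3 / 2) : ℝ)) = _
  linear_combination (2 * √y * sD y * r ^ 2 * r ^ (-(3 / 2) : ℝ)) * e3 + 2 * √y * sD y * e4

lemma Js_eq {r : ℝ} (hr : 0 < r) {s : ℂ} (hs : 0 < s.re) :
    Js s r - ((2 * √π : ℝ) : ℂ) * s ^ ((-(3 / 2) : ℝ) : ℂ) * Complex.exp (-s * r)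
      = ((r ^ (3 / 2 : ℝ) : ℝ) : ℂ) * Complex.exp (-s * r) * ∫ y in Ioi (0 : ℝ), (chi y : ℂ) * Complex.exp (-((r : ℂ) * s) * y) := by
  have hzre : 0 < ((r : ℂ) * s).re := by simp; positivity
  have hs0 : s ≠ 0 := fun h => by simp [h] at hs
  have h1 : Js s r = ∫ t in Ioi r, (Jin r t : ℂ) * Complex.exp (-s * t) := by
    unfold Js
    apply setIntegral_eq_of_subset_of_forall_sdiff_eq_zero measurableSet_Ioi (Ioi_subset_Ioi hr.le)
    intro t ht
    have : ¬ r < t := ht.2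
    simp [Jin, this]
  have h2 : ∫ t in Ioi r, (Jin r t : ℂ) * Complex.exp (-s * t) =
      (r : ℂ) * ∫ y in Ioi (0 : ℝ), (Jin r (r * (1 + y)) : ℂ) * Complex.exp (-s * ((r * (1 + y) : ℝ) : ℂ)) := by
    have a := integral_comp_mul_left_Ioi (fun t : ℝ => (Jin r t : ℂ) * Complex.exp (-s * t)) 1 hr
    rw [mul_one] at a
    have b : ∫ y in Ioi (0 : ℝ), (Jin r (r * (1 + y)) : ℂ) * Complex.exp (-s * ((r * (1 + y) : ℝ) : ℂ)) =
       ∫ x in Ioi (1 : ℝ), (Jin r (r * x) : ℂ) * Complex.exp (-s * ((r * x : ℝ) : ℂ)) := by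
      rw [← integral_indicator measurableSet_Ioi, ← integral_indicator measurableSet_Ioi,
        ← integral_add_left_eq_self ((Ioi (1 : ℝ)).indicator _) 1]
      congr 1; ext y
      by_cases hy : 0 < y
      · rw [indicator_of_mem (by exact hy), indicator_of_mem (by simpa using hy)]
      · rw [indicator_of_notMem (by exact hy), indicator_of_notMem (by simpa using hy)]
    rw [b, a, Complex.real_smul, ← mul_assoc, Complex.ofReal_inv, mul_inv_cancel₀ (by exact_mod_cast hr.ne'), one_mul]
  have i1 : IntegrableOn (fun y : ℝ => ((y ^ ((3 / 2 : ℝ) - 1) : ℝ) : ℂ) * Complex.exp (-((r : ℂ) * s) * y)) (Ioi 0) :=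
    integrable_cweight (by norm_num) hzre
  have i2 : IntegrableOn (fun y : ℝ => (chi y : ℂ) * Complex.exp (-((r : ℂ) * s) * y)) (Ioi 0) :=
    int_of_bound (fun y hy => (chi_deriv hy).continuousAt.continuousWithinAt) (fun y hy => chi_bound hy) hzre
  have h3 : ∫ y in Ioi (0 : ℝ), (Jin r (r * (1 + y)) : ℂ) * Complex.exp (-s * ((r * (1 + y) : ℝ) : ℂ)) =
     ((r ^ (1 / 2 : ℝ) : ℝ) : ℂ) * Complex.exp (-s * r) * (4 * ∫ y in Ioi (0 : ℝ), ((y ^ ((3 / 2 : ℝ) - 1) : ℝ) : ℂ) * Complex.exp (-((r : ℂ) * s) * y))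
     + ((r ^ (1 / 2 : ℝ) : ℝ) : ℂ) * Complex.exp (-s * r) * ∫ y in Ioi (0 : ℝ), (chi y : ℂ) * Complex.exp (-((r : ℂ) * s) * y) := by
    rw [← mul_add, ← integral_const_mul, ← integral_add (i1.const_mul _) i2, ← integral_const_mul]
    apply setIntegral_congr_fun measurableSet_Ioi
    intro y hy
    simp only
    rw [Jin_scale hr hy, Real.sqrt_eq_rpow]
    have : Complex.exp (-s * ((r * (1 + y) : ℝ) : ℂ)) = Complex.exp (-s * r) * Complex.exp (-((r : ℂ) * s) * y) := by
      rw [← Complex.exp_add]; push_cast; ring_nf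
    rw [this, show (3 / 2 : ℝ) - 1 = 1 / 2 by norm_num]
    push_cast
    ring
  have hG : Real.Gamma (3 / 2) = √π / 2 := by
    rw [show (3 / 2 : ℝ) = 1 / 2 + 1 by norm_num, Real.Gamma_add_one (by norm_num), Real.Gamma_one_half_eq]; ring
  have hc : ((r : ℂ) * s) ^ (-((3 / 2 : ℝ) : ℂ)) = ((r ^ (-(3 / 2) : ℝ) : ℝ) : ℂ) * s ^ ((-(3 / 2) : ℝ) : ℂ) := by
    rw [← Complex.ofReal_neg, real_mul_cpow hr hs0]
  have er : (r : ℂ) * ((r ^ (1 / 2 : ℝ) : ℝ) : ℂ) = ((r ^ (3 / 2 : ℝ) : ℝ) : ℂ) := by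
    rw [← Complex.ofReal_mul]; congr 1
    nth_rewrite 1 [← Real.rpow_one r]
    rw [← Real.rpow_add hr]; norm_num
  have er2 : ((r ^ (3 / 2 : ℝ) : ℝ) : ℂ) * ((r ^ (-(3 / 2) : ℝ) : ℝ) : ℂ) = 1 := by
    rw [← Complex.ofReal_mul, ← Real.rpow_add hr]; norm_num
  rw [h1, h2, h3, laplace_pow (by norm_num) hzre, hc, hG, ← er]
  rw [← er] at er2
  push_cast
  linear_combination (2 * (√π : ℂ) * s ^ (-(3 / 2) : ℂ) * Complex.exp (-s * r)) * er2

lemma Js_asymp {l : ℝ} (hl : 0 < l) : ∃ ε : ℝ → ℝ, ∃ K : ℝ, (∀ r > 0, 0 ≤ ε r) ∧ (∀ r > 0, ε r ≤ K) ∧ Tendsto ε atTop (𝓝 0) ∧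
    ∀ σ > 0, ∀ r > 0, ‖Js (fr σ l) r - ((2 * √π : ℝ) : ℂ) * (fr σ l) ^ ((-(3 / 2) : ℝ) : ℂ) * Complex.exp (-fr σ l * r)‖
      ≤ r ^ (-(1 / 2) : ℝ) * ε r * rexp (-σ * r) := by
  set ρ : ℝ → ℝ := fun δ => ∫ y, ‖gch y - gch (y + δ)‖ with hρ
  have hρ0 : ∀ δ, 0 ≤ ρ δ := fun δ => integral_nonneg fun y => norm_nonneg _
  refine ⟨fun r => ((2 * π * l) ^ 2)⁻¹ * ρ (1 / (2 * l * r)), ((2 * π * l) ^ 2)⁻¹ * (2 * ∫ y, ‖gch y‖), ?_, ?_, ?_, ?_⟩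
  · intro r hr
    exact mul_nonneg (by positivity) (hρ0 _)
  · intro r hr
    exact mul_le_mul_of_nonneg_left (trans_bound gch_int (1 / (2 * l * r))) (by positivity)
  · have h1 : Tendsto (fun r : ℝ => 1 / (2 * l * r)) atTop (𝓝 0) := by
      have : Tendsto (fun r : ℝ => 2 * l * r) atTop atTop := tendsto_id.const_mul_atTop (by positivity)
      simp only [one_div]
      exact this.inv_tendsto_atTop
    have := ((trans_cont gch_int).comp h1).const_mul ((2 * π * l) ^ 2)⁻¹
    rw [mul_zero] at this
    exact this
  · intro σ hσ r hr
    have hre : (fr σ l).re = σ := fr_re _ _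
    have him : (fr σ l).im = 2 * π * l := fr_im _ _
    have hzre : 0 < ((r : ℂ) * fr σ l).re := by simp [hre]; positivity
    have hzim : ((r : ℂ) * fr σ l).im = r * (2 * π * l) := by simp [him]
    have hb := chi_int_bound hzre (by rw [hzim]; positivity)
    rw [Js_eq hr (by rw [hre]; exact hσ), norm_mul, norm_mul, Complex.norm_real, Complex.norm_exp,
      Real.norm_of_nonneg (by positivity)]
    have e : (-fr σ l * r).re = -σ * r := by simp [hre]
    rw [e]
    rw [hzim] at hb
    have e2 : π / (r * (2 * π * l)) = 1 / (2 * l * r) := by field_simp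
    rw [e2] at hb
    have e3 : r ^ (3 / 2 : ℝ) * (r ^ 2)⁻¹ = r ^ (-(1 / 2) : ℝ) := by
      rw [← Real.rpow_natCast, ← Real.rpow_neg hr.le, ← Real.rpow_add hr]; norm_num
    calc _ ≤ r ^ (3 / 2 : ℝ) * rexp (-σ * r) * (((r * (2 * π * l)) ^ 2)⁻¹ * ρ (1 / (2 * l * r))) := by gcongr
      _ = (r ^ (3 / 2 : ℝ) * (r ^ 2)⁻¹) * (((2 * π * l) ^ 2)⁻¹ * ρ (1 / (2 * l * r))) * rexp (-σ * r) := by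
        rw [mul_pow, mul_inv]; ring
      _ = _ := by rw [e3]

lemma rad_eq_zero_iff (p : ℤ × ℤ) : rad p = 0 ↔ p = 0 := by
  constructor
  · intro h
    have := rad_sq p
    rw [h] at this
    have h1 : (p.1 : ℝ) = 0 := by nlinarith [sq_nonneg (p.1 : ℝ), sq_nonneg (p.2 : ℝ)]
    have h2 : (p.2 : ℝ) = 0 := by nlinarith [sq_nonneg (p.1 : ℝ), sq_nonneg (p.2 : ℝ)]
    ext <;> simp [Int.cast_eq_zero.1 h1, Int.cast_eq_zero.1 h2]
  · rintro rfl; simp [rad]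

lemma Jin_eq {r t : ℝ} (hr : 0 ≤ r) (ht : 0 < t) : Jin r t = 2 * √(t ^ 4 - r ^ 4) * t ^ (-(3 / 2) : ℝ) := by
  unfold Jin
  split_ifs with h
  · rfl
  · have : t ^ 4 - r ^ 4 ≤ 0 := by
      have := pow_le_pow_left₀ ht.le (not_lt.1 h) 4
      linarith
    rw [Real.sqrt_eq_zero_of_nonpos this]; simp

lemma Js_zero {s : ℂ} (hs : 0 < s.re) : Js s 0 = (√π : ℂ) * s ^ ((-(3 / 2) : ℝ) : ℂ) := by
  have h : Js s 0 = 2 * ∫ t in Ioi (0 : ℝ), ((t ^ ((3 / 2 : ℝ) - 1) : ℝ) : ℂ) * Complex.exp (-s * t) := by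
    unfold Js
    rw [← integral_const_mul]
    apply setIntegral_congr_fun measurableSet_Ioi
    intro t ht
    have ht : 0 < t := ht
    simp only
    rw [Jin_eq le_rfl ht, ← mul_assoc]
    congr 1
    have e : √(t ^ 4 - 0 ^ 4) = t ^ 2 := by
      rw [show t ^ 4 - 0 ^ 4 = (t ^ 2) ^ 2 by ring, Real.sqrt_sq (by positivity)]
    have e2 : t ^ 2 * t ^ (-(3 / 2) : ℝ) = t ^ ((3 / 2 : ℝ) - 1) := by
      rw [← Real.rpow_natCast, ← Real.rpow_add ht]; norm_num
    rw [e, mul_assoc, e2]; push_cast; rfl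
  have hG : Real.Gamma (3 / 2) = √π / 2 := by
    rw [show (3 / 2 : ℝ) = 1 / 2 + 1 by norm_num, Real.Gamma_add_one (by norm_num), Real.Gamma_one_half_eq]; ring
  rw [h, laplace_pow (by norm_num) hs, hG, ← Complex.ofReal_neg]
  push_cast; ring

lemma Js_sum_tendsto {l : ℝ} (hl : 0 < l) :
    Tendsto (fun σ : ℝ => ((σ ^ (3 / 2 : ℝ) : ℝ) : ℂ) * ∑' p : ℤ × ℤ, Js (fr σ l) (rad p)) (𝓝[>] 0)
      (𝓝 ((-(kap * (cnt l / l ^ 2)) : ℝ) : ℂ)) := by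
  obtain ⟨ε, K, h0, hK, hε, hJ⟩ := Js_asymp hl
  obtain ⟨het, hes⟩ := error_tendsto ε K h0 hK hε
  set M : ℝ → ℤ × ℤ → ℂ := fun σ p => ((2 * √π : ℝ) : ℂ) * (fr σ l) ^ ((-(3 / 2) : ℝ) : ℂ) * Complex.exp (-fr σ l * rad p) with hM
  set T : ℝ → ℤ × ℤ → ℝ := fun σ p => rad p ^ (-(1 / 2) : ℝ) * ε (rad p) * rexp (-σ * rad p) with hT
  set o : ℝ → ℝ := fun σ => ‖(√π : ℂ) * (fr σ l) ^ ((-(3 / 2) : ℝ) : ℂ)‖ with ho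
  have hpt : ∀ σ > 0, ∀ p, ‖Js (fr σ l) (rad p) - M σ p‖ ≤ (if p = 0 then o σ else 0) + T σ p := by
    intro σ hσ p
    by_cases hp : p = 0
    · have hr := (rad_eq_zero_iff p).2 hp
      rw [if_pos hp]
      simp only [hM, hT, hr]
      rw [Js_zero (by rw [fr_re]; exact hσ), Real.zero_rpow (by norm_num)]
      simp only [ho]
      have : (√π : ℂ) * fr σ l ^ ((-(3 / 2) : ℝ) : ℂ) - ((2 * √π : ℝ) : ℂ) * fr σ l ^ ((-(3 / 2) : ℝ) : ℂ) * Complex.exp (-fr σ l * (0 : ℝ))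
         = -((√π : ℂ) * fr σ l ^ ((-(3 / 2) : ℝ) : ℂ)) := by
        simp; ring
      rw [this, norm_neg]; simp
    · have hr : 0 < rad p := lt_of_le_of_ne (rad_nonneg p) (fun h => hp ((rad_eq_zero_iff p).1 h.symm))
      rw [if_neg hp, zero_add]
      exact hJ σ hσ _ hr
  have hos : ∀ σ, HasSum (fun p : ℤ × ℤ => if p = 0 then o σ else 0) (o σ) := fun σ => hasSum_ite_eq 0 (o σ)
  have hMs : ∀ σ > 0, Summable (M σ) := by
    intro σ hσ
    apply Summable.mul_left
    apply Summable.of_norm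
    refine (summable_exp_rad hσ).congr fun p => ?_
    rw [Complex.norm_exp]; simp [fr_re]
  have hd : ∀ σ > 0, σ ≤ 1 → Summable (fun p => Js (fr σ l) (rad p) - M σ p) := fun σ hσ h1 =>
    Summable.of_norm_bounded ((hos σ).summable.add (hes σ hσ h1)) (hpt σ hσ)
  have hD : Tendsto (fun σ : ℝ => ((σ ^ (3 / 2 : ℝ) : ℝ) : ℂ) * ∑' p : ℤ × ℤ, (Js (fr σ l) (rad p) - M σ p)) (𝓝[>] 0) (𝓝 0) := by
    have hol : Tendsto (fun σ : ℝ => σ ^ (3 / 2 : ℝ) * o σ + σ ^ (3 / 2 : ℝ) * ∑' p, T σ p) (𝓝[>] 0) (𝓝 0) := by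
      have hl0 : l ≠ 0 := hl.ne'
      have h3 := ((continuousAt_cpow_const (b := ((-(3 / 2) : ℝ) : ℂ)) (slit_fr hl0)).tendsto.comp (fr_tendsto l)).const_mul (√π : ℂ)
      have h4 := (rpow_tendsto_zero (a := 3 / 2) (by norm_num)).mul h3.norm
      rw [zero_mul] at h4
      have := h4.add het
      rw [zero_add] at this
      exact this
    refine squeeze_zero_norm' ?_ hol
    have h1 : ∀ᶠ σ : ℝ in 𝓝[>] 0, σ ≤ 1 := mem_nhdsWithin_of_mem_nhds (Iic_mem_nhds one_pos)
    filter_upwards [self_mem_nhdsWithin, h1] with σ hσ hσ1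
    have hσ : 0 < σ := hσ
    rw [norm_mul, Complex.norm_real, Real.norm_of_nonneg (by positivity), ← mul_add]
    gcongr
    have h5 := tsum_of_norm_bounded ((hos σ).summable.add (hes σ hσ hσ1)).hasSum (hpt σ hσ)
    rwa [(hos σ).summable.tsum_add (hes σ hσ hσ1), (hos σ).tsum_eq] at h5
  have hmain := main_tendsto hl
  have := hmain.add hD
  rw [add_zero] at this
  refine this.congr' ?_
  have h1 : ∀ᶠ σ : ℝ in 𝓝[>] 0, σ ≤ 1 := mem_nhdsWithin_of_mem_nhds (Iic_mem_nhds one_pos)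
  filter_upwards [self_mem_nhdsWithin, h1] with σ hσ hσ1
  have := (hMs σ hσ).tsum_add (hd σ hσ hσ1)
  rw [← mul_add, ← this]
  congr 2; ext p; ring

noncomputable def Wf (t : ℝ) : ℝ := ∑' p : ℤ × ℤ, 2 * √(t ^ 4 - rad p ^ 4)

lemma Wf_meas : Measurable Wf := by
  have : Wf = fun t => (∑' p : ℤ × ℤ, ENNReal.ofReal (2 * √(t ^ 4 - rad p ^ 4))).toReal := by
    ext t
    rw [ENNReal.tsum_toReal_eq (fun _ => ENNReal.ofReal_ne_top)]
    unfold Wf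
    congr 1; ext p
    rw [ENNReal.toReal_ofReal (by positivity)]
  rw [this]
  apply Measurable.ennreal_toReal
  apply Measurable.ennreal_tsum
  intro p
  fun_prop

lemma Jin_meas (r : ℝ) : Measurable (Jin r) := by
  unfold Jin
  exact Measurable.ite measurableSet_Ioi (by fun_prop) measurable_const

lemma Jin_bound {r t σ : ℝ} (hr : 0 ≤ r) (ht : 0 < t) (hσ : 0 < σ) :
    |Jin r t| * rexp (-σ * t) ≤ 2 * rexp (-(σ / 2) * r) * (t ^ ((3 / 2 : ℝ) - 1) * rexp (-(σ / 2) * t)) := by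
  unfold Jin
  split_ifs with h
  · have e : √(t ^ 4 - r ^ 4) ≤ t ^ 2 := by
      rw [Real.sqrt_le_left (by positivity)]
      have : 0 ≤ r ^ 4 := by positivity
      nlinarith
    have e2 : t ^ 2 * t ^ (-(3 / 2) : ℝ) = t ^ ((3 / 2 : ℝ) - 1) := by
      rw [← Real.rpow_natCast, ← Real.rpow_add ht]; norm_num
    have e3 : rexp (-σ * t) ≤ rexp (-(σ / 2) * r) * rexp (-(σ / 2) * t) := by
      rw [← Real.exp_add]; apply Real.exp_le_exp.2; nlinarith
    rw [abs_of_nonneg (by positivity)]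
    calc _ ≤ 2 * t ^ 2 * t ^ (-(3 / 2) : ℝ) * (rexp (-(σ / 2) * r) * rexp (-(σ / 2) * t)) := by gcongr
      _ = 2 * (t ^ 2 * t ^ (-(3 / 2) : ℝ)) * (rexp (-(σ / 2) * r) * rexp (-(σ / 2) * t)) := by ring
      _ = _ := by rw [e2]; ring
  · simp; positivity

lemma W_laplace {s : ℂ} (hs : 0 < s.re) :
    ∫ t in Ioi (0 : ℝ), ((Wf t * t ^ (-(3 / 2) : ℝ) : ℝ) : ℂ) * Complex.exp (-s * t) = ∑' p : ℤ × ℤ, Js s (rad p) := by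
  have hw := integrable_weight (a := 3 / 2) (σ := s.re / 2) (by norm_num) (by linarith)
  have hnorm : ∀ (p : ℤ × ℤ) (t : ℝ), 0 < t → ‖(Jin (rad p) t : ℂ) * Complex.exp (-s * t)‖ ≤
      2 * rexp (-(s.re / 2) * rad p) * (t ^ ((3 / 2 : ℝ) - 1) * rexp (-(s.re / 2) * t)) := by
    intro p t ht
    rw [norm_mul, Complex.norm_real, Complex.norm_exp, Real.norm_eq_abs]
    have e : (-s * t).re = -s.re * t := by simp
    rw [e]
    exact Jin_bound (rad_nonneg p) ht hs
  have hInt : ∀ p : ℤ × ℤ, IntegrableOn (fun t : ℝ => (Jin (rad p) t : ℂ) * Complex.exp (-s * t)) (Ioi 0) := by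
    intro p
    refine Integrable.mono' (hw.const_mul (2 * rexp (-(s.re / 2) * rad p))) ?_ ?_
    · exact (Complex.measurable_ofReal.comp (Jin_meas _)).aestronglyMeasurable.mul (by fun_prop)
    · exact (ae_restrict_iff' measurableSet_Ioi).2 (Eventually.of_forall fun t ht => hnorm p t ht)
  have hsum : Summable (fun p : ℤ × ℤ => ∫ t in Ioi (0 : ℝ), ‖(Jin (rad p) t : ℂ) * Complex.exp (-s * t)‖) := by
    have hs2 := ((summable_exp_rad (c := s.re / 2) (by linarith)).mul_left 2).mul_right
      (∫ t in Ioi (0 : ℝ), t ^ ((3 / 2 : ℝ) - 1) * rexp (-(s.re / 2) * t))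
    refine Summable.of_nonneg_of_le (fun p => integral_nonneg fun t => norm_nonneg _) (fun p => ?_) hs2
    rw [← integral_const_mul]
    exact setIntegral_mono_on (hInt p).norm (hw.const_mul _) measurableSet_Ioi (fun t ht => hnorm p t ht)
  have h := (hasSum_integral_of_summable_integral_norm hInt hsum).tsum_eq
  unfold Js
  rw [h]
  apply setIntegral_congr_fun measurableSet_Ioi
  intro t ht
  simp only
  rw [tsum_mul_right]
  congr 1
  unfold Wf
  rw [← Complex.ofReal_tsum, ← tsum_mul_right]
  congr 2; ext p
  rw [Jin_eq (rad_nonneg p) ht]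

noncomputable def Ff (t : ℝ) : ℝ := (Wf t - (π ^ 2 / 2) * t ^ 4) / t ^ 2

lemma Ff_meas : Measurable Ff := by
  have := Wf_meas
  unfold Ff; fun_prop

lemma Ff_limit {C : ℝ} (hC : ∀ t, 0 < t → |Ff t| ≤ C) {μ : ℝ} (hμ : 0 < μ) :
    Tendsto (fun σ => Mn σ (fun t => Ff t * Real.cos (2 * π * μ * t))) (𝓝[>] 0) (𝓝 (-(kap * (cnt μ / μ ^ 2)))) := by
  have hBM : BM Ff := ⟨Ff_meas, C, hC⟩
  have h1 := Js_sum_tendsto hμ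
  have h2 := (laplace_tendsto (a := 7 / 2) (by norm_num) hμ.ne').const_mul ((π ^ 2 / 2 : ℝ) : ℂ)
  have h3 := h1.sub h2
  rw [mul_zero, sub_zero] at h3
  have h4 := (Complex.continuous_re.tendsto _).comp h3
  rw [Complex.ofReal_re] at h4
  refine h4.congr' ?_
  filter_upwards [self_mem_nhdsWithin] with σ hσ
  have hσ : 0 < σ := hσ
  have hre : 0 < (fr σ μ).re := by rw [fr_re]; exact hσ
  have h5 := Mn_eq_re hBM μ 0 hσ
  simp only [add_zero] at h5
  rw [h5]
  simp only [Function.comp]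
  congr 1
  simp only [Complex.ofReal_zero, neg_zero, zero_mul, Complex.exp_zero, one_mul]
  have i1 : IntegrableOn (fun t : ℝ => ((t ^ ((7 / 2 : ℝ) - 1) : ℝ) : ℂ) * Complex.exp (-fr σ μ * t)) (Ioi 0) :=
    integrable_cweight (by norm_num) hre
  have i2 : IntegrableOn (fun t : ℝ => (Ff t : ℂ) * (((t ^ ((3 / 2 : ℝ) - 1) : ℝ) : ℂ) * Complex.exp (-fr σ μ * t))) (Ioi 0) := by
    refine Integrable.bdd_mul (c := C) (integrable_cweight (by norm_num) hre) ?_ ?_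
    · exact (Complex.measurable_ofReal.comp Ff_meas).aestronglyMeasurable
    · refine (ae_restrict_iff' measurableSet_Ioi).2 (Eventually.of_forall fun t ht => ?_)
      simpa using hC t ht
  have e : ∫ t in Ioi (0 : ℝ), ((Wf t * t ^ (-(3 / 2) : ℝ) : ℝ) : ℂ) * Complex.exp (-fr σ μ * t) =
      (∫ t in Ioi (0 : ℝ), (Ff t : ℂ) * (((t ^ ((3 / 2 : ℝ) - 1) : ℝ) : ℂ) * Complex.exp (-fr σ μ * t)))
      + ((π ^ 2 / 2 : ℝ) : ℂ) * ∫ t in Ioi (0 : ℝ), ((t ^ ((7 / 2 : ℝ) - 1) : ℝ) : ℂ) * Complex.exp (-fr σ μ * t) := by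
    rw [← integral_const_mul, ← integral_add i2 (i1.const_mul _)]
    apply setIntegral_congr_fun measurableSet_Ioi
    intro t ht
    have ht : 0 < t := ht
    have a1 : t ^ ((3 / 2 : ℝ) - 1) = t ^ 2 * t ^ (-(3 / 2) : ℝ) := by
      rw [← Real.rpow_natCast t 2, ← Real.rpow_add ht]; norm_num
    have a2 : t ^ ((7 / 2 : ℝ) - 1) = t ^ 4 * t ^ (-(3 / 2) : ℝ) := by
      rw [← Real.rpow_natCast t 4, ← Real.rpow_add ht]; norm_num
    have a3 : Wf t * t ^ (-(3 / 2) : ℝ) = Ff t * t ^ ((3 / 2 : ℝ) - 1) + π ^ 2 / 2 * t ^ ((7 / 2 : ℝ) - 1) := by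
      rw [a1, a2]; unfold Ff; field_simp; ring
    simp only
    rw [a3]; push_cast; ring
  rw [← W_laplace hre, e]
  ring


lemma abs_le_rad (p : ℤ × ℤ) : |(p.1 : ℝ)| ≤ rad p ∧ |(p.2 : ℝ)| ≤ rad p := by
  have := rad_sq p
  have h0 := rad_nonneg p
  constructor
  · exact abs_le_of_sq_le_sq (by nlinarith [sq_nonneg (p.2 : ℝ)]) h0
  · exact abs_le_of_sq_le_sq (by nlinarith [sq_nonneg (p.1 : ℝ)]) h0

noncomputable def bx (t : ℝ) : Finset (ℤ × ℤ) := Finset.Icc (-⌈t⌉) ⌈t⌉ ×ˢ Finset.Icc (-⌈t⌉) ⌈t⌉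

lemma mem_bx {t : ℝ} {p : ℤ × ℤ} (h : rad p < t) : p ∈ bx t := by
  obtain ⟨h1, h2⟩ := abs_le_rad p
  have hc := Int.le_ceil t
  have a1 := abs_le.1 (h1.trans (h.le.trans hc))
  have a2 := abs_le.1 (h2.trans (h.le.trans hc))
  unfold bx
  rw [Finset.mem_product, Finset.mem_Icc, Finset.mem_Icc]
  exact ⟨⟨by exact_mod_cast a1.1, by exact_mod_cast a1.2⟩, ⟨by exact_mod_cast a2.1, by exact_mod_cast a2.2⟩⟩

lemma bx_card {t : ℝ} (ht : 1 ≤ t) : ((bx t).card : ℝ) ≤ 25 * t ^ 2 := by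
  have h1 : (Finset.Icc (-⌈t⌉) ⌈t⌉).card = (2 * ⌈t⌉ + 1).toNat := by
    rw [Int.card_Icc]; congr 1; ring
  have hc : 0 ≤ ⌈t⌉ := Int.ceil_nonneg (by linarith)
  have h2 : (((2 * ⌈t⌉ + 1).toNat : ℕ) : ℝ) = 2 * (⌈t⌉ : ℝ) + 1 := by
    have : (((2 * ⌈t⌉ + 1).toNat : ℕ) : ℤ) = 2 * ⌈t⌉ + 1 := Int.toNat_of_nonneg (by omega)
    exact_mod_cast this
  unfold bx
  rw [Finset.card_product, h1]
  push_cast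
  rw [h2]
  have h3 := Int.ceil_lt_add_one t
  have h4 : 0 ≤ (⌈t⌉ : ℝ) := by exact_mod_cast hc
  nlinarith

lemma Wf_eq {t : ℝ} (ht : 0 < t) : Wf t = ∑ p ∈ bx t, 2 * √(t ^ 4 - rad p ^ 4) := by
  unfold Wf
  apply tsum_eq_sum
  intro p hp
  have h : t ≤ rad p := by
    by_contra h
    exact hp (mem_bx (not_le.1 h))
  have : t ^ 4 - rad p ^ 4 ≤ 0 := by
    have := pow_le_pow_left₀ ht.le h 4
    linarith
  rw [Real.sqrt_eq_zero_of_nonpos this]; simp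

lemma S_eq {t : ℝ} (ht : 0 < t) :
    S (t ^ 4) = ∑ p ∈ bx t, (Finset.Ioo (-⌈√(t ^ 4 - rad p ^ 4)⌉) ⌈√(t ^ 4 - rad p ^ 4)⌉).card := by
  have key : ∀ (y : ℝ) (w : ℤ), (w : ℝ) ^ 2 < y ↔ w ∈ Finset.Ioo (-⌈√y⌉) ⌈√y⌉ := by
    intro y w
    rw [Finset.mem_Ioo, neg_lt, Int.lt_ceil, Int.lt_ceil, ← sq_abs, ← Real.lt_sqrt (abs_nonneg _), abs_lt]
    push_cast
    constructor
    · rintro ⟨a, b⟩; exact ⟨by linarith, b⟩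
    · rintro ⟨a, b⟩; exact ⟨by linarith, b⟩
  rw [← Finset.card_sigma]
  let f : (Σ _ : ℤ × ℤ, ℤ) → ℤ × ℤ × ℤ := fun q => (q.1.1, q.1.2, q.2)
  have hf : Function.Injective f := by
    rintro ⟨⟨a, b⟩, w⟩ ⟨⟨a', b'⟩, w'⟩ h
    simp only [f, Prod.mk.injEq] at h
    obtain ⟨rfl, rfl, rfl⟩ := h
    rfl
  rw [← Set.ncard_coe_finset, ← Set.ncard_image_of_injective _ hf]
  unfold S
  congr 1
  ext ⟨a, b, w⟩
  have hr := rad_sq (a, b)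
  simp only at hr
  have h4 : rad (a, b) ^ 4 = ((a : ℝ) ^ 2 + (b : ℝ) ^ 2) ^ 2 := by rw [← hr]; ring
  simp only [Set.mem_setOf_eq, Set.mem_image, Finset.mem_coe, Finset.mem_sigma]
  constructor
  · intro h
    refine ⟨⟨(a, b), w⟩, ⟨?_, ?_⟩, rfl⟩
    · apply mem_bx
      apply lt_of_pow_lt_pow_left₀ 4 ht.le
      rw [h4]
      nlinarith [sq_nonneg (w : ℝ)]
    · simp only
      rw [← key, h4]; linarith
  · rintro ⟨⟨⟨a', b'⟩, w'⟩, ⟨_, h⟩, heq⟩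
    simp only [f, Prod.mk.injEq] at heq
    obtain ⟨rfl, rfl, rfl⟩ := heq
    simp only at h
    rw [← key, h4] at h
    linarith

lemma cnt_one (v : ℝ) (hv : 0 ≤ v) : |((Finset.Ioo (-⌈v⌉) ⌈v⌉).card : ℝ) - 2 * v| ≤ 1 := by
  rw [Int.card_Ioo]
  rcases hv.eq_or_lt with rfl | h
  · simp
  · have hc : 1 ≤ ⌈v⌉ := Int.one_le_ceil_iff.2 h
    have h2 : (((⌈v⌉ - -⌈v⌉ - 1).toNat : ℕ) : ℝ) = 2 * (⌈v⌉ : ℝ) - 1 := by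
      have : (((⌈v⌉ - -⌈v⌉ - 1).toNat : ℕ) : ℤ) = 2 * ⌈v⌉ - 1 := by
        rw [Int.toNat_of_nonneg (by omega)]; ring
      exact_mod_cast this
    rw [h2, abs_le]
    have h3 := Int.ceil_lt_add_one v
    have h4 := Int.le_ceil v
    constructor <;> linarith

lemma SW {t : ℝ} (ht : 1 ≤ t) : |(S (t ^ 4) : ℝ) - Wf t| ≤ 25 * t ^ 2 := by
  have ht0 : 0 < t := by linarith
  rw [S_eq ht0, Wf_eq ht0]
  push_cast
  rw [← Finset.sum_sub_distrib]
  refine (Finset.abs_sum_le_sum_abs _ _).trans ?_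
  refine (Finset.sum_le_card_nsmul _ _ 1 (fun p _ => cnt_one _ (Real.sqrt_nonneg _))).trans ?_
  simpa using bx_card ht

lemma Ff_bound {C : ℝ} (hC0 : 0 < C) (hC : ∀ x : ℝ, 1 ≤ x → |E x| ≤ C * x ^ ((1 : ℝ) / 2)) (t : ℝ) (ht : 0 < t) :
    |Ff t| ≤ C + 25 := by
  by_cases h1 : 1 ≤ t
  · have h := hC (t ^ 4) (one_le_pow₀ h1)
    have e : (t ^ 4) ^ ((1 : ℝ) / 2) = t ^ 2 := by
      rw [← Real.sqrt_eq_rpow, show t ^ 4 = (t ^ 2) ^ 2 by ring, Real.sqrt_sq (by positivity)]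
    rw [e] at h
    have h2 := SW h1
    unfold Ff
    rw [abs_div, abs_of_pos (by positivity : 0 < t ^ 2), div_le_iff₀ (by positivity)]
    unfold E at h
    have : Wf t - π ^ 2 / 2 * t ^ 4 = (S (t ^ 4) - π ^ 2 / 2 * t ^ 4) - (S (t ^ 4) - Wf t) := by ring
    rw [this]
    refine (abs_sub _ _).trans ?_
    linarith
  · have h1 : t < 1 := not_le.1 h1
    have hW : Wf t = 2 * t ^ 2 := by
      unfold Wf
      rw [tsum_eq_single 0]
      · rw [(rad_eq_zero_iff 0).2 rfl, show t ^ 4 - 0 ^ 4 = (t ^ 2) ^ 2 by ring, Real.sqrt_sq (by positivity)]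
      · intro p hp
        have hr : 1 ≤ rad p := by
          have h0 : 0 < (p.1 : ℝ) ^ 2 + (p.2 : ℝ) ^ 2 := by
            rw [← rad_sq]
            have : rad p ≠ 0 := fun h => hp ((rad_eq_zero_iff p).1 h)
            positivity
          have h2 : (1 : ℤ) ≤ p.1 ^ 2 + p.2 ^ 2 := by
            have : (0 : ℤ) < p.1 ^ 2 + p.2 ^ 2 := by exact_mod_cast h0
            omega
          unfold rad
          rw [Real.one_le_sqrt]
          exact_mod_cast h2
        have : t ^ 4 - rad p ^ 4 ≤ 0 := by
          have := pow_le_pow_left₀ ht.le (h1.le.trans hr) 4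
          linarith
        rw [Real.sqrt_eq_zero_of_nonpos this]; simp
    have e : Ff t = 2 - π ^ 2 / 2 * t ^ 2 := by
      unfold Ff; rw [hW]; field_simp
    rw [e, abs_le]
    have hp := Real.pi_le_four
    have hp0 := Real.pi_pos
    have a : π ^ 2 ≤ 16 := by nlinarith
    have b : t ^ 2 ≤ 1 := by nlinarith
    have c : π ^ 2 / 2 * t ^ 2 ≤ 8 := by nlinarith [sq_nonneg t]
    have d : 0 ≤ π ^ 2 / 2 * t ^ 2 := by positivity
    constructor <;> linarith

/-- There is no constant `C > 0` such that `|E(x)| ≤ C·x^{1/2}` for all `x ≥ 1`;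
the exponent `1/2` in the bound `|E(x)| ≪ x^{1/2} log x` is thus best possible. -/
theorem no_sqrt_bound :
    ¬ ∃ C : ℝ, 0 < C ∧ ∀ x : ℝ, 1 ≤ x → |E x| ≤ C * x ^ ((1 : ℝ) / 2) := by
  rintro ⟨C, hC0, hC⟩
  have hb := Ff_bound hC0 hC
  refine partA Ff Ff_meas (C + 25) hb kap kap_pos (fun μ => cnt μ / μ ^ 2) (fun μ hμ => Ff_limit hb hμ) ?_
  intro μ hμ B hB
  have := cnt_ge μ B hB
  show (B.card : ℝ) / μ ^ 2 ≤ cnt μ / μ ^ 2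
  gcongr
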